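/- The special flow {Φ_t} built over the natural extension Ĝ of the Gauss map with roof function φ(x,y) = ln(⌊1/y⌋ + x) is mixing: for all measurable sets A, B ⊆ D_Φ, μ3(Φ_t^{−1}(A) ∩ B) → μ3(A)·μ3(B) as t → +∞. -/

import Mathlib

open MeasureTheory Filter Set Topology

noncomputable section

/-- The Gauss map `x ↦ {1/x}`. -/
def gaussMap (x : ℝ) : ℝ := Int.fract (1 / x)

/-- The `n`-th partial quotient (1-indexed) of the continued fraction expansion of `α`:
`pq α n = ⌊1 / 𝒢^{n-1} α⌋`. -/
def pq (α : ℝ) (n : ℕ) : ℕ := ⌊1 / gaussMap^[n - 1] α⌋₊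

/-- Denominators of the convergents attached to a (1-indexed) sequence of partial quotients:
`q 0 = 1`, `q 1 = b 1`, `q (n+2) = b (n+2) * q (n+1) + q n`. -/
def qden (b : ℕ → ℕ) : ℕ → ℕ
  | 0 => 1
  | 1 => b 1
  | n + 2 => b (n + 2) * qden b (n + 1) + qden b n

/-- Numerators of the convergents attached to a (1-indexed) sequence of partial quotients:
`p 0 = 0`, `p 1 = 1`, `p (n+2) = b (n+2) * p (n+1) + p n`. -/
def pnum (b : ℕ → ℕ) : ℕ → ℕ
  | 0 => 0
  | 1 => 1
  | n + 2 => b (n + 2) * pnum b (n + 1) + pnum b n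

/-- `n_R(α)`: the first index `n` with `q_n(α) > R`. -/
def nIndex (α : ℝ) (R : ℝ) : ℕ := sInf {n : ℕ | R < (qden (pq α) n : ℝ)}

/-- The Gauss measure on `(0,1)`, with density `1 / (ln 2 · (1 + x))`. -/
def gaussMeasure : Measure ℝ :=
  (volume.restrict (Ioo (0 : ℝ) 1)).withDensity fun x =>
    ENNReal.ofReal (1 / (Real.log 2 * (1 + x)))

/-- The domain `D = ((0,1) ∖ ℚ) × ((0,1) ∖ ℚ)` of the natural extension of the Gauss map. -/
def Dset : Set (ℝ × ℝ) :=
  {p | p.1 ∈ Ioo (0 : ℝ) 1 ∧ Irrational p.1 ∧ p.2 ∈ Ioo (0 : ℝ) 1 ∧ Irrational p.2}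

/-- The invariant measure `μ₂` on `D`, with density `1 / (ln 2 · (1 + x y)²)`. -/
def mu2 : Measure (ℝ × ℝ) :=
  (volume.restrict Dset).withDensity fun p =>
    ENNReal.ofReal (1 / (Real.log 2 * (1 + p.1 * p.2) ^ 2))

/-- The roof function `φ(x, y) = ln (⌊1/y⌋ + x)`. -/
def roof (p : ℝ × ℝ) : ℝ := Real.log ((⌊1 / p.2⌋ : ℝ) + p.1)

/-- The natural extension of the Gauss map,
`Ĝ(x, y) = (1 / (⌊1/y⌋ + x), 1/y − ⌊1/y⌋)`. -/
def GhatMap (p : ℝ × ℝ) : ℝ × ℝ := (1 / ((⌊1 / p.2⌋ : ℝ) + p.1), Int.fract (1 / p.2))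

/-- Birkhoff sums `S_r φ(p) = ∑_{i<r} φ(Ĝ^i p)` of the roof function under `Ĝ`. -/
def birk (p : ℝ × ℝ) (r : ℕ) : ℝ := ∑ i ∈ Finset.range r, roof (GhatMap^[i] p)

/-- `r(p, T)`: the first `r` with `S_r φ(p) > T`. -/
def rTime (p : ℝ × ℝ) (T : ℝ) : ℕ := sInf {r : ℕ | T < birk p r}

/-- Value of a finite continued fraction `[b₁, b₂, …, bₘ] = 1/(b₁ + 1/(b₂ + ⋯ + 1/bₘ))`,
entries given as a list. -/
def cfList : List ℝ → ℝ
  | [] => 0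
  | b :: t => 1 / (b + cfList t)

/-- The `m`-th truncation `[b 1, b 2, …, b m]` of an infinite continued fraction. -/
def cfTrunc (b : ℕ → ℝ) (m : ℕ) : ℝ := cfList ((List.range m).map fun i => b (i + 1))

/-- Value of the infinite continued fraction `[b 1, b 2, …]`, i.e. the limit of its finite
truncations. -/
def cfVal (b : ℕ → ℝ) : ℝ := limUnder atTop fun m => cfTrunc b m

/-- The finite continued fraction on the reversed word,
`cfRev b k = [b k; b (k-1), …, b 1] = b k + 1/(b (k-1) + ⋯ + 1/(b 1))`. -/
def cfRev (b : ℕ → ℝ) (k : ℕ) : ℝ :=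
  b k + cfList ((List.range (k - 1)).map fun i => b (k - 1 - i))

/-- For a bi-infinite sequence `a : ℤ → ℕ` of partial quotients,
`fn a n = ln q_n − ∑_{k=1}^n ln [a_k; a_{k-1}, a_{k-2}, …]`. -/
def fn (a : ℤ → ℕ) (n : ℕ) : ℝ :=
  Real.log (qden (fun k => a (k : ℤ)) n : ℝ) -
    ∑ k ∈ Finset.Icc 1 n,
      Real.log ((a (k : ℤ) : ℝ) + cfVal fun j => (a ((k : ℤ) - (j : ℤ)) : ℝ))

/-- The bi-sided cylinder of length `n` in `D` prescribing the sequence coordinates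
`a_k = b k` for `−n ≤ k ≤ n` (where `a_k`, `k ≥ 1`, are the partial quotients of the second
coordinate and `a_{−j}`, `j ≥ 0`, are the partial quotients of the first coordinate). -/
def cylinder (n : ℕ) (b : ℤ → ℕ) : Set (ℝ × ℝ) :=
  {p ∈ Dset | (∀ k : ℕ, 1 ≤ k → k ≤ n → pq p.2 k = b (k : ℤ)) ∧
    ∀ j : ℕ, j ≤ n → pq p.1 (j + 1) = b (-(j : ℤ))}

/-- The phase space of the special flow over `Ĝ` with roof function `φ`. -/
def DPhi : Set ((ℝ × ℝ) × ℝ) := {q | q.1 ∈ Dset ∧ 0 ≤ q.2 ∧ q.2 < roof q.1}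

/-- The invariant probability measure `μ₃` of the special flow. -/
def mu3 : Measure ((ℝ × ℝ) × ℝ) :=
  (ENNReal.ofReal (∫ p, roof p ∂mu2))⁻¹ • ((mu2.prod volume).restrict DPhi)

/-- The special flow `Φ_t` (for `t ≥ 0`) built over `Ĝ` with roof function `φ`:
`Φ_t(p, s) = (Ĝ^{r-1} p, s + t − S_{r-1} φ(p))` where `r = r(p, s + t)`. -/
def flowMap (t : ℝ) (q : (ℝ × ℝ) × ℝ) : (ℝ × ℝ) × ℝ :=
  (GhatMap^[rTime q.1 (q.2 + t) - 1] q.1,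
    q.2 + t - birk q.1 (rTime q.1 (q.2 + t) - 1))

end

/-!
The argument is of Hopf type and does not use the mixing of `Ĝ`. On the cover of points
`(x, y, s)` with `x`, `y` irrational in `(0, 1)` and `s` real, the special flow is the quotient of
the translation `s ↦ s + t` by the powers of the deck transformation
`(x, y, s) ↦ (Ĝ (x, y), s - φ (x, y))`. Since `Ĝ` contracts the first coordinate, the leaves on
which `y` and `s - ln (1 + x y)` are constant are stable. The time reversal
`(x, y, s) ↦ (y, x, ln (1 + x y) - s)` descends to the quotient and takes them to the unstable
leaves, on which `x` and `s` are constant.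

Let `h` be a weak limit in `L²` of a function `f` of mean zero moved by the flow as `t → ∞`. It is
constant along stable leaves, so a weak limit `h'` of `h` moved backwards is constant along stable
and unstable leaves. Hence `h'` is, almost everywhere, a function `F (x, s)`. On stable leaves
`F (x, s) = F (x', s + ln (1 + x' y) - ln (1 + x y))` for almost every `y`, so `F (x', ·)` has
uncountably many almost everywhere periods and is constant. Therefore `h' = 0`; and `h = 0`, since
`‖h‖² = ⟪h', f⟫`.
-/

namespace GaussFlow

noncomputable section

section WeakConvergence

variable {ι 𝕜 H : Type*} [RCLike 𝕜] [NormedAddCommGroup H] [InnerProductSpace 𝕜 H]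

variable (𝕜) in
/-- Weak convergence of a family of vectors of an inner product space along a filter. -/
def TendstoWeakly (v : ι → H) (l : Filter ι) (h : H) : Prop :=
  ∀ g, Tendsto (fun t => inner 𝕜 (v t) g) l (𝓝 (inner 𝕜 h g))

lemma exists_tendstoWeakly_of_norm_le [CompleteSpace H] (𝒰 : Ultrafilter ι) {v : ι → H} {C : ℝ}
    (hv : ∀ t, ‖v t‖ ≤ C) : ∃ h, TendstoWeakly 𝕜 v 𝒰 h := by
  let w : ι → WeakDual 𝕜 H := fun t => StrongDual.toWeakDual (InnerProductSpace.toDual 𝕜 H (v t))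
  have hw (t : ι) : w t ∈ WeakDual.toStrongDual ⁻¹' Metric.closedBall (0 : StrongDual 𝕜 H) C := by
    simpa [w] using hv t
  obtain ⟨d, -, hd⟩ := (WeakDual.isCompact_closedBall (𝕜 := 𝕜) (E := H) 0 C).ultrafilter_le_nhds
    (𝒰.map w) (le_principal_iff.2 (Eventually.of_forall hw : ∀ᶠ t in 𝒰, w t ∈ _))
  refine ⟨(InnerProductSpace.toDual 𝕜 H).symm (WeakDual.toStrongDual d), fun g => ?_⟩
  have hdg : Tendsto (fun t => w t g) 𝒰 (𝓝 (d g)) :=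
    ((WeakDual.eval_continuous g).tendsto d).comp hd
  simpa [w] using hdg

lemma TendstoWeakly.mem_of_eventually_near {l : Filter ι} [l.NeBot] {v : ι → H} {h : H}
    (hv : TendstoWeakly 𝕜 v l h) {K : Submodule 𝕜 H} [K.HasOrthogonalProjection]
    (hK : ∀ ε > 0, ∀ᶠ t in l, ∃ w ∈ K, ‖v t - w‖ < ε) : h ∈ K := by
  rw [← K.orthogonal_orthogonal, Submodule.mem_orthogonal']
  intro g hg
  refine tendsto_nhds_unique (hv g) (tendsto_zero_iff_norm_tendsto_zero.2 ?_)
  refine (nhds_basis_abs_sub_lt (0 : ℝ)).tendsto_right_iff.2 fun ε hε => ?_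
  filter_upwards [hK (ε / (‖g‖ + 1)) (by positivity)] with t ⟨w, hw, hvw⟩
  have horth : inner 𝕜 (v t) g = inner 𝕜 (v t - w) g := by
    rw [inner_sub_left, hg w hw, sub_zero]
  rw [sub_zero, abs_norm, horth]
  calc ‖inner 𝕜 (v t - w) g‖ ≤ ‖v t - w‖ * ‖g‖ := norm_inner_le_norm _ _
    _ ≤ ‖v t - w‖ * (‖g‖ + 1) := by gcongr; linarith
    _ < ε := (lt_div_iff₀ (by positivity)).1 hvw

end WeakConvergence

section AbstractMixing

variable {𝕜 H : Type*} [RCLike 𝕜] [NormedAddCommGroup H] [InnerProductSpace 𝕜 H]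

/-- `K` is a self-adjoint symmetry reversing the time of the unitary flow `U`. -/
structure IsTimeReversal (U : ℝ → H →ₗᵢ[𝕜] H) (K : H →ₗᵢ[𝕜] H) : Prop where
  inner_flow : ∀ t f g, inner 𝕜 (U t f) g = inner 𝕜 f (U (-t) g)
  inner_reversal : ∀ f g, inner 𝕜 (K f) g = inner 𝕜 f (K g)
  reversal_flow : ∀ t f, K (U t f) = U (-t) (K f)

/-- A filtration `W` by closed subspaces with dense union, which the flow `U` shifts by the time.
In the application `W c` consists of the functions which are constant along the part above height
`c` of the stable leaves. -/
structure IsStableFiltration (U : ℝ → H →ₗᵢ[𝕜] H) (W : ℝ → Submodule 𝕜 H) : Prop where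
  isClosed : ∀ c, IsClosed (W c : Set H)
  monotone : Monotone W
  flow_mem : ∀ t c f, f ∈ W c → U t f ∈ W (c - t)
  dense : ∀ f, ∀ ε > 0, ∃ c, ∃ w ∈ W c, ‖f - w‖ < ε

variable {U : ℝ → H →ₗᵢ[𝕜] H} {K : H →ₗᵢ[𝕜] H} {W : ℝ → Submodule 𝕜 H} {e : H}

lemma IsTimeReversal.tendstoWeakly (hK : IsTimeReversal U K) {l : Filter ℝ} {h h' : H}
    (hh' : TendstoWeakly 𝕜 (fun t => U (-t) h) l h') :
    TendstoWeakly 𝕜 (fun t => U t (K h)) l (K h') := fun g => by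
  rw [hK.inner_reversal]
  refine (hh' (K g)).congr fun t => ?_
  rw [← hK.inner_reversal, hK.reversal_flow, neg_neg]

variable [CompleteSpace H]

lemma IsStableFiltration.mem_of_forward_limit (hW : IsStableFiltration U W) {𝒰 : Ultrafilter ℝ}
    (h𝒰 : (𝒰 : Filter ℝ) ≤ atTop) {f h : H} (hh : TendstoWeakly 𝕜 (fun t => U t f) 𝒰 h) (c : ℝ) :
    h ∈ W c := by
  have := (hW.isClosed c).completeSpace_coe
  refine hh.mem_of_eventually_near fun ε hε => ?_
  obtain ⟨c₀, w, hw, hfw⟩ := hW.dense f ε hε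
  refine h𝒰 ?_
  filter_upwards [eventually_ge_atTop (c₀ - c)] with t ht
  refine ⟨U t w, hW.monotone (by linarith) (hW.flow_mem t c₀ w hw), ?_⟩
  rwa [← map_sub, LinearIsometry.norm_map]

lemma IsStableFiltration.mem_of_backward_limit (hW : IsStableFiltration U W) {l : Filter ℝ}
    [l.NeBot] {h h' : H} (hh : ∀ c, h ∈ W c) (hh' : TendstoWeakly 𝕜 (fun t => U (-t) h) l h')
    (c : ℝ) : h' ∈ W c := by
  have := (hW.isClosed c).completeSpace_coe
  refine hh'.mem_of_eventually_near fun ε hε => Eventually.of_forall fun t => ⟨U (-t) h, ?_, ?_⟩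
  · simpa using hW.flow_mem (-t) (c - t) h (hh _)
  · simpa using hε

/-- A backward weak limit `h'` of a forward weak limit `h` of `f` is constant along the stable
leaves (because `h` is) and along the unstable ones (because it is a backward limit), so it is a
multiple of `e`; and `‖h‖² = ⟪h', f⟫`. -/
lemma tendstoWeakly_zero_of_inner_eq_zero (hK : IsTimeReversal U K) (hW : IsStableFiltration U W)
    (hUe : ∀ t, U t e = e)
    (herg : ∀ f, (∀ c, f ∈ W c) → (∀ c, K f ∈ W c) → ∃ a : 𝕜, f = a • e)
    {f : H} (hf : inner 𝕜 f e = 0) : TendstoWeakly 𝕜 (fun t => U t f) atTop 0 := by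
  refine fun g => (tendsto_iff_ultrafilter _ _ _).2 fun 𝒰 h𝒰 => ?_
  obtain ⟨h, hh⟩ := exists_tendstoWeakly_of_norm_le (𝕜 := 𝕜) 𝒰 (v := fun t => U t f) (C := ‖f‖)
    (fun t => by simp)
  obtain ⟨h', hh'⟩ := exists_tendstoWeakly_of_norm_le (𝕜 := 𝕜) 𝒰 (v := fun t => U (-t) h)
    (C := ‖h‖) (fun t => by simp)
  have hinner : ∀ t g, inner 𝕜 (U t g) e = inner 𝕜 g e := fun t g => by rw [hK.inner_flow, hUe]
  have hhe : inner 𝕜 h e = 0 := by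
    refine tendsto_nhds_unique (hh e) ?_
    simp only [hinner, hf, tendsto_const_nhds]
  have hh'e : inner 𝕜 h' e = 0 := by
    refine tendsto_nhds_unique (hh' e) ?_
    simp only [hinner, hhe, tendsto_const_nhds]
  have hh'0 : h' = 0 := by
    obtain ⟨a, rfl⟩ := herg h' (hW.mem_of_backward_limit (hW.mem_of_forward_limit h𝒰 hh) hh')
      (hW.mem_of_forward_limit h𝒰 (hK.tendstoWeakly hh'))
    rw [← inner_self_eq_zero (𝕜 := 𝕜), inner_smul_right, hh'e, mul_zero]
  have hh0 : inner 𝕜 h h = 0 := by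
    refine tendsto_nhds_unique (hh h) ?_
    have hconj := (RCLike.continuous_conj.tendsto _).comp (hh' f)
    simpa [Function.comp_def, hh'0, hK.inner_flow] using hconj
  simpa [inner_self_eq_zero.1 hh0] using hh g

theorem tendstoWeakly_inner_smul (hK : IsTimeReversal U K) (hW : IsStableFiltration U W)
    (he : ‖e‖ = 1) (hUe : ∀ t, U t e = e)
    (herg : ∀ f, (∀ c, f ∈ W c) → (∀ c, K f ∈ W c) → ∃ a : 𝕜, f = a • e) (f : H) :
    TendstoWeakly 𝕜 (fun t => U t f) atTop (inner 𝕜 e f • e) := by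
  have hortho : inner 𝕜 (f - inner 𝕜 e f • e) e = 0 := by
    rw [inner_sub_left, inner_smul_left, inner_conj_symm, inner_self_eq_norm_sq_to_K, he]
    simp
  intro g
  have hlim := tendstoWeakly_zero_of_inner_eq_zero hK hW hUe herg hortho g
  simp only [map_sub, map_smul, hUe, inner_sub_left, inner_zero_left] at hlim
  exact tendsto_sub_nhds_zero_iff.1 hlim

end AbstractMixing

section Periods

/-- The almost everywhere periods of a function on the line. -/
def aePeriods {E : Type*} (f : ℝ → E) : AddSubgroup ℝ where
  carrier := {p | ∀ᵐ s, f (s + p) = f s}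
  zero_mem' := ae_of_all _ fun s => by rw [add_zero]
  add_mem' {p q} hp hq := by
    have hq' := (measurePreserving_add_right volume p).quasiMeasurePreserving.ae hq
    filter_upwards [mem_ofPred_eq.mp hp, hq'] with s hsp hsq
    rw [← add_assoc, hsq, hsp]
  neg_mem' {p} hp := by
    have hp' := (measurePreserving_add_right volume (-p)).quasiMeasurePreserving.ae hp
    filter_upwards [hp'] with s hs
    rw [← hs, neg_add_cancel_right]

lemma mem_aePeriods {E : Type*} {f : ℝ → E} {p : ℝ} :
    p ∈ aePeriods f ↔ ∀ᵐ s, f (s + p) = f s := Iff.rfl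

variable {E : Type*} [NormedAddCommGroup E] [NormedSpace ℝ E]

/-- The primitive of `f` is additive along the periods, hence everywhere, hence linear. -/
lemma integral_eq_smul_of_dense_aePeriods {f : ℝ → E} (hf : LocallyIntegrable f)
    (hP : Dense (aePeriods f : Set ℝ)) (t : ℝ) : ∫ s in 0..t, f s = t • ∫ s in 0..1, f s := by
  have hint : ∀ a b, IntervalIntegrable f volume a b := fun a b =>
    (hf.integrableOn_isCompact isCompact_uIcc).intervalIntegrable
  let F : ℝ → E := fun t => ∫ s in 0..t, f s
  have hF : Continuous F := intervalIntegral.continuous_primitive hint 0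
  have hperiod : ∀ t, ∀ p ∈ aePeriods f, F (t + p) = F t + F p := fun t p hp => by
    have htranslate : ∫ s in p..t + p, f s = F t := by
      rw [← zero_add p, ← add_assoc, add_zero, ← intervalIntegral.integral_comp_add_right]
      exact intervalIntegral.integral_congr_ae ((mem_aePeriods.1 hp).mono fun s hs _ => hs)
    rw [add_comm (F t), ← htranslate]
    exact (intervalIntegral.integral_add_adjacent_intervals (hint 0 p) (hint p (t + p))).symm
  have hadd : ∀ t p, F (t + p) = F t + F p := fun t => congr_fun <|
    Continuous.ext_on hP (by fun_prop) (by fun_prop) (hperiod t)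
  simpa [F] using map_real_smul (AddMonoidHom.mk' F hadd) hF t 1

lemma exists_ae_eq_const_of_locallyIntegrable_of_dense_aePeriods [CompleteSpace E]
    {f : ℝ → E} (hf : LocallyIntegrable f) (hP : Dense (aePeriods f : Set ℝ)) :
    ∃ c, ∀ᵐ s, f s = c := by
  refine ⟨∫ s in 0..1, f s, ?_⟩
  filter_upwards [LocallyIntegrable.ae_hasDerivAt_integral hf] with x hx
  have hlinear : HasDerivAt (fun t => ∫ s in 0..t, f s) (∫ s in 0..1, f s) x := by
    simpa only [id, one_smul, ← integral_eq_smul_of_dense_aePeriods hf hP] using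
      (hasDerivAt_id x).smul_const (∫ s in 0..1, f s)
  exact (hx 0).unique hlinear

lemma exists_ae_eq_const_of_dense_aePeriods {f : ℝ → ℝ} (hf : Measurable f)
    (hP : Dense (aePeriods f : Set ℝ)) : ∃ c, ∀ᵐ s, f s = c := by
  have hint : LocallyIntegrable (fun s => Real.arctan (f s)) := by
    refine (locallyIntegrable_const (Real.pi / 2)).mono
      (Real.measurable_arctan.comp hf).aestronglyMeasurable (ae_of_all _ fun s => ?_)
    rw [Real.norm_eq_abs, Real.norm_of_nonneg (by positivity), abs_le]
    exact ⟨(Real.neg_pi_div_two_lt_arctan _).le, (Real.arctan_lt_pi_div_two _).le⟩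
  have hle : aePeriods f ≤ aePeriods fun s => Real.arctan (f s) :=
    fun p hp => (mem_aePeriods.1 hp).mono fun s hs => congrArg Real.arctan hs
  obtain ⟨c, hc⟩ := exists_ae_eq_const_of_locallyIntegrable_of_dense_aePeriods hint (hP.mono hle)
  exact ⟨Real.tan c, hc.mono fun s hs => by rw [← hs, Real.tan_arctan]⟩

lemma exists_ae_eq_const_of_uncountable_aePeriods {f : ℝ → ℝ} (hf : Measurable f)
    (hP : ¬ (aePeriods f : Set ℝ).Countable) : ∃ c, ∀ᵐ s, f s = c := by
  refine exists_ae_eq_const_of_dense_aePeriods hf ?_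
  refine (AddSubgroup.dense_or_cyclic _).resolve_right fun ⟨a, ha⟩ => hP ?_
  rw [ha, ← AddSubgroup.zmultiples_eq_closure]
  exact countable_range _

/-- If the translates of `f` by uncountably many numbers agree, then `f` has uncountably many
periods. -/
lemma exists_ae_eq_const_of_ae_eq_comp_add {Y : Type*} [MeasurableSpace Y] {μ : Measure Y}
    [NeZero μ] [NullSingletonClass μ] {ψ : Y → ℝ} (hψ : Function.Injective ψ) {f g : ℝ → ℝ}
    (hf : Measurable f) (hfg : ∀ᵐ y ∂μ, ∀ᵐ s, g s = f (s + ψ y)) : ∃ c, ∀ᵐ s, f s = c := by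
  obtain ⟨y₀, hy₀⟩ := hfg.exists
  have hperiod : ∀ᵐ y ∂μ, ψ y - ψ y₀ ∈ aePeriods f := by
    filter_upwards [hfg] with y hy
    have hshift := (measurePreserving_add_right volume (-ψ y₀)).quasiMeasurePreserving.ae
      (hy.and hy₀)
    filter_upwards [hshift] with s hs
    rw [add_sub_assoc', add_sub_right_comm, sub_eq_add_neg, ← hs.1, hs.2, neg_add_cancel_right]
  refine exists_ae_eq_const_of_uncountable_aePeriods hf fun hcount => ?_
  have hnull := (hcount.preimage_of_injOn (f := fun y => ψ y - ψ y₀)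
    (fun y _ y' _ h => hψ (sub_left_injective h))).measure_zero μ
  obtain ⟨y, hy, hy'⟩ := (hperiod.and (measure_eq_zero_iff_ae_notMem.1 hnull)).exists
  exact hy' hy

end Periods

section FundamentalDomain

variable {G X : Type*} [Group G] [MulAction G X] {E : Set X}

variable (G) in
/-- A set containing exactly one translate of every point: the version of
`MeasureTheory.IsFundamentalDomain` without exceptional null sets. -/
def IsStrictFundamentalDomain (E : Set X) : Prop := ∀ x, ∃! g : G, g • x ∈ E

namespace IsStrictFundamentalDomain

/-- The representative of the orbit of a point in a strict fundamental domain. -/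
def reduce (hE : IsStrictFundamentalDomain G E) (x : X) : X := (hE x).exists.choose • x

lemma reduce_mem (hE : IsStrictFundamentalDomain G E) (x : X) : hE.reduce x ∈ E :=
  (hE x).exists.choose_spec

lemma exists_reduce_eq_smul (hE : IsStrictFundamentalDomain G E) (x : X) :
    ∃ g : G, hE.reduce x = g • x := ⟨_, rfl⟩

lemma reduce_eq_smul (hE : IsStrictFundamentalDomain G E) {x : X} {g : G} (hg : g • x ∈ E) :
    hE.reduce x = g • x := by
  rw [reduce, (hE x).unique (hE x).exists.choose_spec hg]

lemma reduce_of_mem (hE : IsStrictFundamentalDomain G E) {x : X} (hx : x ∈ E) :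
    hE.reduce x = x := by
  rw [hE.reduce_eq_smul (g := 1) (by rwa [one_smul]), one_smul]

lemma reduce_smul (hE : IsStrictFundamentalDomain G E) (g : G) (x : X) :
    hE.reduce (g • x) = hE.reduce x := by
  obtain ⟨k, hk⟩ := hE.exists_reduce_eq_smul x
  have hkg : (k * g⁻¹) • g • x = hE.reduce x := by rw [hk, smul_smul, inv_mul_cancel_right]
  rw [hE.reduce_eq_smul (g := k * g⁻¹) (by rw [hkg]; exact hE.reduce_mem x), hkg]

lemma reduce_map_reduce (hE : IsStrictFundamentalDomain G E) {T : X → X} {θ : G → G}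
    (hθ : ∀ g x, T (g • x) = θ g • T x) (x : X) :
    hE.reduce (T (hE.reduce x)) = hE.reduce (T x) := by
  obtain ⟨g, hg⟩ := hE.exists_reduce_eq_smul x
  rw [hg, hθ, hE.reduce_smul]

lemma preimage_reduce (hE : IsStrictFundamentalDomain G E) (S : Set X) :
    hE.reduce ⁻¹' S = ⋃ g : G, (g • ·) ⁻¹' (E ∩ S) := by
  ext x
  simp only [mem_preimage, mem_iUnion, mem_inter_iff]
  refine ⟨fun hx => ?_, fun ⟨g, hgE, hgS⟩ => by rwa [hE.reduce_eq_smul hgE]⟩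
  obtain ⟨g, hg⟩ := hE.exists_reduce_eq_smul x
  exact ⟨g, hg ▸ hE.reduce_mem x, hg ▸ hx⟩

variable [MeasurableSpace X]

lemma isFundamentalDomain (hE : IsStrictFundamentalDomain G E) (hEm : MeasurableSet E)
    (μ : Measure X) : IsFundamentalDomain G E μ := .mk' hEm.nullMeasurableSet hE

variable [Countable G] [MeasurableConstSMul G X]

lemma measurable_reduce (hE : IsStrictFundamentalDomain G E) (hEm : MeasurableSet E) :
    Measurable hE.reduce := fun S hS => by
  rw [hE.preimage_reduce]
  exact .iUnion fun g => measurable_const_smul g (hEm.inter hS)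

variable {μ : Measure X} [SMulInvariantMeasure G X μ]

lemma quasiMeasurePreserving_reduce (hE : IsStrictFundamentalDomain G E) (hEm : MeasurableSet E) :
    Measure.QuasiMeasurePreserving hE.reduce μ (μ.restrict E) := by
  refine ⟨hE.measurable_reduce hEm, .mk fun S hS hS0 => ?_⟩
  rw [Measure.restrict_apply hS, inter_comm] at hS0
  rw [Measure.map_apply (hE.measurable_reduce hEm) hS, preimage_reduce, measure_iUnion_null_iff]
  intro g
  rw [measure_preimage_smul, hS0]

/-- The fundamental domain stands for the quotient by `G`, on which `T` acts because it normalizes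
the action. -/
lemma measurePreserving_reduce_comp (hE : IsStrictFundamentalDomain G E) (hEm : MeasurableSet E)
    {T : X ≃ᵐ X} (hT : MeasurePreserving T μ μ) (θ : G ≃ G) (hθ : ∀ g x, T (g • x) = θ g • T x) :
    MeasurePreserving (fun x => hE.reduce (T x)) (μ.restrict E) (μ.restrict E) := by
  have hm : Measurable fun x => hE.reduce (T x) := (hE.measurable_reduce hEm).comp T.measurable
  have hTE : IsFundamentalDomain G (T '' E) μ :=
    (hE.isFundamentalDomain hEm μ).image_of_equiv T.toEquiv hT.symm.quasiMeasurePreserving θ.symm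
      fun g x => by simp [hθ]
  refine ⟨hm, Measure.ext fun S hS => ?_⟩
  have hSm := hE.measurable_reduce hEm hS
  rw [Measure.map_apply hm hS, Measure.restrict_apply (hm hS), Measure.restrict_apply hS]
  calc μ ((fun x => hE.reduce (T x)) ⁻¹' S ∩ E)
      = μ (T ⁻¹' (hE.reduce ⁻¹' S ∩ T '' E)) := by
        rw [preimage_inter, preimage_image_eq _ T.injective]; rfl
    _ = μ (hE.reduce ⁻¹' S ∩ T '' E) := hT.measure_preimage_equiv _
    _ = μ (hE.reduce ⁻¹' S ∩ E) := by
        refine hTE.measure_set_eq (hE.isFundamentalDomain hEm μ) hSm fun g => ?_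
        ext x; simp [hE.reduce_smul]
    _ = μ (S ∩ E) := by
        congr 1
        ext x
        exact and_congr_left fun hx => by rw [mem_preimage, hE.reduce_of_mem hx]

end IsStrictFundamentalDomain

section Cyclic

lemma existsUnique_le_and_succ_lt {u : ℤ → ℝ} {δ : ℝ} (hδ : 0 < δ) (hu : ∀ n, u (n + 1) < u n)
    (hu₂ : ∀ n, u (n + 2) ≤ u n - δ) (c : ℝ) : ∃! n, c ≤ u n ∧ u (n + 1) < c := by
  have hanti : StrictAnti u := strictAnti_int_of_succ_lt hu
  have hdrop : ∀ (n : ℤ) (k : ℕ), u (n + 2 * k) ≤ u n - k * δ := fun n k => by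
    induction k with
    | zero => simp
    | succ k ih =>
      have hstep := hu₂ (n + 2 * k)
      rw [show n + 2 * (k : ℤ) + 2 = n + 2 * (k + 1 : ℕ) by push_cast; ring] at hstep
      push_cast at hstep ⊢
      linarith
  obtain ⟨k, hk⟩ := exists_nat_gt ((u 0 - c) / δ)
  obtain ⟨l, hl⟩ := exists_nat_gt ((c - u 0) / δ)
  rw [div_lt_iff₀ hδ] at hk hl
  have hbelow : u (2 * k) < c := by
    have := hdrop 0 k
    rw [zero_add] at this
    linarith
  have habove : c ≤ u (-(2 * l)) := by
    have := hdrop (-(2 * l)) l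
    rw [neg_add_cancel] at this
    linarith
  obtain ⟨n, hn, hmax⟩ := Int.exists_greatest_of_bdd (P := fun n => c ≤ u n)
    ⟨2 * k, fun z hz => (hanti.lt_iff_gt.1 (hbelow.trans_le hz)).le⟩ ⟨-(2 * l), habove⟩
  refine ⟨n, ⟨hn, lt_of_not_ge fun h => (hmax _ h).not_gt (lt_add_one n)⟩, fun m ⟨hm, hm'⟩ => ?_⟩
  exact (hmax m hm).antisymm (Int.lt_add_one_iff.1 (hanti.lt_iff_gt.1 (hm'.trans_le hn)))

/-- Along each orbit the height `ψ` decreases from `+∞` to `-∞`; the set consists of the last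
points at which it is at least `c`. -/
lemma isStrictFundamentalDomain_zpowers_of_height (R : Equiv.Perm X) {ψ : X → ℝ} {δ : ℝ}
    (hδ : 0 < δ) (hψ : ∀ x, ψ (R x) < ψ x) (hψ₂ : ∀ x, ψ (R (R x)) ≤ ψ x - δ) (c : ℝ) :
    IsStrictFundamentalDomain (Subgroup.zpowers R) {x | c ≤ ψ x ∧ ψ (R x) < c} := by
  intro x
  have hsucc : ∀ n : ℤ, (R ^ (n + 1)) x = R ((R ^ n) x) := fun n => by
    rw [add_comm, zpow_one_add, Equiv.Perm.mul_apply]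
  obtain ⟨n, hn, huniq⟩ : ∃! n : ℤ, c ≤ ψ ((R ^ n) x) ∧ ψ (R ((R ^ n) x)) < c := by
    simpa only [hsucc] using existsUnique_le_and_succ_lt (u := fun n => ψ ((R ^ n) x)) hδ
      (fun n => by rw [hsucc]; exact hψ _)
      (fun n => by rw [← one_add_one_eq_two, ← add_assoc, hsucc, hsucc]; exact hψ₂ _) c
  refine ⟨⟨R ^ n, n, rfl⟩, hn, ?_⟩
  rintro ⟨_, m, rfl⟩ hm
  obtain rfl := huniq m hm
  rfl

lemma IsStrictFundamentalDomain.reduce_pow_apply {R : Equiv.Perm X}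
    (hE : IsStrictFundamentalDomain (Subgroup.zpowers R) E) (n : ℕ) (x : X) :
    hE.reduce ((R ^ n) x) = hE.reduce x :=
  hE.reduce_smul (⟨R ^ n, n, zpow_natCast R n⟩ : Subgroup.zpowers R) x

lemma IsStrictFundamentalDomain.reduce_eq_pow_apply {R : Equiv.Perm X}
    (hE : IsStrictFundamentalDomain (Subgroup.zpowers R) E) {n : ℕ} {x : X} (hx : (R ^ n) x ∈ E) :
    hE.reduce x = (R ^ n) x :=
  hE.reduce_eq_smul (g := ⟨R ^ n, n, zpow_natCast R n⟩) hx

section Height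

variable {R : Equiv.Perm X} {ψ : X → ℝ}

lemma strictAnti_height_zpow (hψ : ∀ x, ψ (R x) < ψ x) (x : X) :
    StrictAnti fun n : ℤ => ψ ((R ^ n) x) :=
  strictAnti_int_of_succ_lt fun n => by
    rw [add_comm, zpow_one_add, Equiv.Perm.mul_apply]
    exact hψ _

variable {c : ℝ} (hψ : ∀ x, ψ (R x) < ψ x)
  (hE : IsStrictFundamentalDomain (Subgroup.zpowers R) {x | c ≤ ψ x ∧ ψ (R x) < c})
include hψ

lemma exists_nat_reduce_eq_pow {x : X} (hx : c ≤ ψ x) : ∃ n : ℕ, hE.reduce x = (R ^ n) x := by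
  obtain ⟨⟨_, n, rfl⟩, hn⟩ := hE.exists_reduce_eq_smul x
  change hE.reduce x = (R ^ n) x at hn
  have hlt : ψ ((R ^ (n + 1)) x) < ψ ((R ^ (0 : ℤ)) x) := by
    rw [add_comm, zpow_one_add, Equiv.Perm.mul_apply, ← hn]
    exact (hE.reduce_mem x).2.trans_le hx
  have hnonneg : 0 ≤ n := Int.lt_add_one_iff.1 ((strictAnti_height_zpow hψ x).lt_iff_gt.1 hlt)
  lift n to ℕ using hnonneg
  exact ⟨n, by rwa [zpow_natCast] at hn⟩

lemma exists_nat_pow_reduce_eq {x : X} (hx : ψ x < c) : ∃ n : ℕ, (R ^ n) (hE.reduce x) = x := by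
  obtain ⟨⟨_, n, rfl⟩, hn⟩ := hE.exists_reduce_eq_smul x
  change hE.reduce x = (R ^ n) x at hn
  have hlt : ψ ((R ^ (0 : ℤ)) x) < ψ ((R ^ n) x) := hn ▸ hx.trans_le (hE.reduce_mem x).1
  obtain ⟨k, rfl⟩ := Int.exists_eq_neg_ofNat ((strictAnti_height_zpow hψ x).lt_iff_gt.1 hlt).le
  exact ⟨k, by rw [hn, zpow_neg, zpow_natCast, ← Equiv.Perm.mul_apply, mul_inv_cancel,
    Equiv.Perm.one_apply]⟩

end Height

lemma zpowers_smul_comm {R T : Equiv.Perm X} (h : ∀ x, T (R x) = R (T x))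
    (g : Subgroup.zpowers R) (x : X) : T (g • x) = g • T x := by
  obtain ⟨_, n, rfl⟩ := g
  have hTR : Commute T R := Equiv.ext h
  exact Equiv.congr_fun (hTR.zpow_right n).eq x

lemma zpowers_smul_comm_inv {R T : Equiv.Perm X} (h : ∀ x, R (T (R x)) = T x)
    (g : Subgroup.zpowers R) (x : X) : T (g • x) = g⁻¹ • T x := by
  obtain ⟨_, n, rfl⟩ := g
  have hTR : SemiconjBy T R R⁻¹ := eq_inv_mul_iff_mul_eq.2 (Equiv.ext h)
  have hn := hTR.zpow_right n
  rw [inv_zpow] at hn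
  exact Equiv.congr_fun hn.eq x

variable [MeasurableSpace X] {μ : Measure X} {R : X ≃ᵐ X}

lemma measurePreserving_zpow (hR : MeasurePreserving R μ μ) (n : ℤ) :
    MeasurePreserving (R.toEquiv ^ n : Equiv.Perm X) μ μ := by
  have hpow : ∀ S : X ≃ᵐ X, MeasurePreserving S μ μ → ∀ n : ℕ,
      MeasurePreserving (S.toEquiv ^ n : Equiv.Perm X) μ μ := fun S hS n => by
    rw [Equiv.Perm.coe_pow]
    exact hS.iterate n
  cases n with
  | ofNat n => simpa using hpow R hR n
  | negSucc n =>
    rw [zpow_negSucc, ← inv_pow]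
    exact hpow R.symm (hR.symm R) (n + 1)

lemma smulInvariantMeasure_zpowers (hR : MeasurePreserving R μ μ) :
    SMulInvariantMeasure (Subgroup.zpowers (R.toEquiv : Equiv.Perm X)) X μ where
  measure_preimage_smul := by
    rintro ⟨_, n, rfl⟩ s hs
    exact (measurePreserving_zpow hR n).measure_preimage hs.nullMeasurableSet

lemma measurableConstSMul_zpowers (hR : MeasurePreserving R μ μ) :
    MeasurableConstSMul (Subgroup.zpowers (R.toEquiv : Equiv.Perm X)) X where
  measurable_const_smul := by
    rintro ⟨_, n, rfl⟩
    exact (measurePreserving_zpow hR n).measurable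

end Cyclic

end FundamentalDomain

section LpTools

variable {X : Type*} [MeasurableSpace X] {μ : Measure X}

variable {E : Type*} [NormedAddCommGroup E]

lemma tendsto_eLpNorm_sub_of_bounded_of_ae_tendsto [IsFiniteMeasure μ] {p : ENNReal}
    [Fact (1 ≤ p)] (hp : p ≠ ⊤) {u : ℕ → X → E} {v : X → E} {C : ℝ}
    (hu : ∀ n, AEStronglyMeasurable (u n) μ) (hv : MemLp v p μ) (hC : ∀ n x, ‖u n x‖ ≤ C)
    (hlim : ∀ᵐ x ∂μ, Tendsto (fun n => u n x) atTop (𝓝 (v x))) :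
    Tendsto (fun n => eLpNorm (u n - v) p μ) atTop (𝓝 0) := by
  refine tendsto_Lp_finite_of_tendsto_ae (Fact.out) hp hu hv ?_ hlim
  refine unifIntegrable_of Fact.out hp hu fun ε _ => ⟨(C + 1).toNNReal, fun n => ?_⟩
  have hempty : {x | (C + 1).toNNReal ≤ ‖u n x‖₊} = ∅ := eq_empty_of_forall_notMem fun x hx => by
    have hx' : C + 1 ≤ ‖u n x‖ := (Real.le_coe_toNNReal _).trans hx
    linarith [hC n x]
  simp [hempty]

variable {Q 𝕜 : Type*} [MeasurableSpace Q] {m : Measure Q} {α β : Q → X}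

variable (𝕜 E) [NormedRing 𝕜] [Module 𝕜 E] [IsBoundedSMul 𝕜 E] (p : ENNReal)

/-- The subspace of the functions `f` in `Lᵖ` such that `f ∘ α = f ∘ β` almost everywhere. The maps
`α` and `β` are quasi-measure-preserving, so this does not depend on the representative of `f`. -/
def aeEqualizer (hα : Measure.QuasiMeasurePreserving α m μ)
    (hβ : Measure.QuasiMeasurePreserving β m μ) : Submodule 𝕜 (Lp E p μ) where
  carrier := {f | ∀ᵐ q ∂m, f (α q) = f (β q)}
  add_mem' {f g} hf hg := by
    filter_upwards [mem_ofPred_eq.mp hf, mem_ofPred_eq.mp hg, hα.ae (Lp.coeFn_add f g),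
      hβ.ae (Lp.coeFn_add f g)] with q hfq hgq hαq hβq
    rw [hαq, hβq, Pi.add_apply, Pi.add_apply, hfq, hgq]
  zero_mem' := by
    filter_upwards [hα.ae (Lp.coeFn_zero E p μ), hβ.ae (Lp.coeFn_zero E p μ)] with q hαq hβq
    rw [hαq, hβq, Pi.zero_apply, Pi.zero_apply]
  smul_mem' c f hf := by
    filter_upwards [mem_ofPred_eq.mp hf, hα.ae (Lp.coeFn_smul c f), hβ.ae (Lp.coeFn_smul c f)]
      with q hfq hαq hβq
    rw [hαq, hβq, Pi.smul_apply, Pi.smul_apply, hfq]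

variable {𝕜 E p}

lemma mem_aeEqualizer {hα : Measure.QuasiMeasurePreserving α m μ}
    {hβ : Measure.QuasiMeasurePreserving β m μ} {f : Lp E p μ} :
    f ∈ aeEqualizer E 𝕜 p hα hβ ↔ ∀ᵐ q ∂m, f (α q) = f (β q) := Iff.rfl

variable [Fact (1 ≤ p)]

lemma isClosed_aeEqualizer (hα : Measure.QuasiMeasurePreserving α m μ)
    (hβ : Measure.QuasiMeasurePreserving β m μ) :
    IsClosed (aeEqualizer E 𝕜 p hα hβ : Set (Lp E p μ)) := by
  refine IsSeqClosed.isClosed fun u f hu hf => ?_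
  obtain ⟨ns, -, hns⟩ := (tendstoInMeasure_of_tendsto_Lp hf).exists_seq_tendsto_ae
  have hu' : ∀ᵐ q ∂m, ∀ n, u n (α q) = u n (β q) := ae_all_iff.2 fun n => mem_aeEqualizer.1 (hu n)
  refine mem_aeEqualizer.2 ?_
  filter_upwards [hα.ae hns, hβ.ae hns, hu'] with q hαq hβq huq
  simp only [huq] at hαq
  exact tendsto_nhds_unique hαq hβq

lemma compMeasurePreservingₗᵢ_comm {S₁ S₂ T₁ T₂ : X → X} (hS₁ : MeasurePreserving S₁ μ μ)
    (hS₂ : MeasurePreserving S₂ μ μ) (hT₁ : MeasurePreserving T₁ μ μ)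
    (hT₂ : MeasurePreserving T₂ μ μ) (h : ∀ x, T₁ (S₁ x) = T₂ (S₂ x)) (f : Lp E p μ) :
    Lp.compMeasurePreservingₗᵢ 𝕜 S₁ hS₁ (Lp.compMeasurePreservingₗᵢ 𝕜 T₁ hT₁ f) =
      Lp.compMeasurePreservingₗᵢ 𝕜 S₂ hS₂ (Lp.compMeasurePreservingₗᵢ 𝕜 T₂ hT₂ f) :=
  calc _ = Lp.compMeasurePreserving (T₁ ∘ S₁) (hT₁.comp hS₁) f :=
        (Lp.compMeasurePreserving_comp_apply f hT₁ hS₁).symm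
    _ = Lp.compMeasurePreserving (T₂ ∘ S₂) (hT₂.comp hS₂) f := by
        congr 2
        exact funext h
    _ = _ := Lp.compMeasurePreserving_comp_apply f hT₂ hS₂

lemma inner_compMeasurePreservingₗᵢ_left {𝕜 : Type*} [RCLike 𝕜] [InnerProductSpace 𝕜 E]
    {S T : X → X} (hS : MeasurePreserving S μ μ) (hT : MeasurePreserving T μ μ)
    (h : ∀ᵐ x ∂μ, T (S x) = x) (f g : Lp E 2 μ) :
    inner 𝕜 (Lp.compMeasurePreservingₗᵢ 𝕜 T hT f) g =
      inner 𝕜 f (Lp.compMeasurePreservingₗᵢ 𝕜 S hS g) := by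
  have hST : Lp.compMeasurePreservingₗᵢ 𝕜 S hS (Lp.compMeasurePreservingₗᵢ 𝕜 T hT f) = f := by
    refine Lp.ext ?_
    filter_upwards [Lp.coeFn_compMeasurePreserving (Lp.compMeasurePreservingₗᵢ 𝕜 T hT f) hS,
      hS.quasiMeasurePreserving.ae (Lp.coeFn_compMeasurePreserving f hT), h] with x hSx hTx hx
    exact hSx.trans (hTx.trans (by rw [Function.comp_apply, hx]))
  rw [← LinearIsometry.inner_map_map (Lp.compMeasurePreservingₗᵢ 𝕜 S hS), hST]

/-- The constant function `1` in `L²`. -/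
abbrev oneL2 (μ : Measure X) [IsFiniteMeasure μ] : Lp ℝ 2 μ := Lp.const 2 μ 1

lemma norm_oneL2 [IsProbabilityMeasure μ] : ‖oneL2 μ‖ = 1 := by
  simp [Lp.norm_const]

lemma compMeasurePreservingₗᵢ_oneL2 [IsFiniteMeasure μ] {T : X → X} (hT : MeasurePreserving T μ μ) :
    Lp.compMeasurePreservingₗᵢ ℝ T hT (oneL2 μ) = oneL2 μ := rfl

lemma tendsto_measure_preimage_inter [IsProbabilityMeasure μ] {ι : Type*} {l : Filter ι}
    {T : ι → X → X} (hT : ∀ t, MeasurePreserving (T t) μ μ)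
    (hmix : ∀ f : Lp ℝ 2 μ, TendstoWeakly ℝ
      (fun t => Lp.compMeasurePreservingₗᵢ ℝ (T t) (hT t) f) l (inner ℝ (oneL2 μ) f • oneL2 μ))
    {A B : Set X} (hA : MeasurableSet A) (hB : MeasurableSet B) :
    Tendsto (fun t => μ (T t ⁻¹' A ∩ B)) l (𝓝 (μ A * μ B)) := by
  have hreal : Tendsto (fun t => μ.real (T t ⁻¹' A ∩ B)) l (𝓝 (μ.real A * μ.real B)) := by
    have := hmix (indicatorConstLp 2 hA (measure_ne_top μ A) 1)
      (indicatorConstLp 2 hB (measure_ne_top μ B) 1)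
    simpa [oneL2, ← indicatorConstLp_univ, inner_smul_left,
      L2.real_inner_indicatorConstLp_one_indicatorConstLp_one,
      Lp.indicatorConstLp_compMeasurePreserving, Lp.compMeasurePreservingₗᵢ,
      Lp.compMeasurePreservingₗ] using this
  refine (ENNReal.tendsto_toReal_iff (fun t => measure_ne_top _ _) ?_).1 ?_
  · exact ENNReal.mul_ne_top (measure_ne_top _ _) (measure_ne_top _ _)
  · rwa [ENNReal.toReal_mul]

end LpTools

section GaussMap

/-- The set of irrational numbers of the unit interval. -/
def unitIrrationals : Set ℝ := {x | x ∈ Ioo (0 : ℝ) 1 ∧ Irrational x}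

/-- The type of irrational numbers of the unit interval, on which the Gauss map and the inverse of
its natural extension are defined everywhere. -/
abbrev UnitIrrational : Type := unitIrrationals

namespace UnitIrrational

lemma pos (x : UnitIrrational) : 0 < (x : ℝ) := x.2.1.1

lemma lt_one (x : UnitIrrational) : (x : ℝ) < 1 := x.2.1.2

lemma irrational (x : UnitIrrational) : Irrational (x : ℝ) := x.2.2

lemma one_lt_one_div (x : UnitIrrational) : 1 < 1 / (x : ℝ) :=
  (one_lt_div x.pos).2 x.lt_one

lemma irrational_one_div (x : UnitIrrational) : Irrational (1 / (x : ℝ)) := by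
  rw [one_div, irrational_inv_iff]
  exact x.irrational

end UnitIrrational

/-- The inverse branches of the Gauss map. They are numbered from `0`, so that `branch n` takes its
values in `(1 / (n + 2), 1 / (n + 1))`. -/
def branch (n : ℕ) (x : UnitIrrational) : UnitIrrational where
  val := 1 / (n + 1 + x)
  property := by
    have hx := x.pos
    refine ⟨⟨by positivity, (div_lt_one (by positivity)).2 ?_⟩, ?_⟩
    · linarith [n.cast_nonneg (α := ℝ)]
    · rw [one_div, irrational_inv_iff]
      exact_mod_cast x.irrational.natCast_add (n + 1)

lemma coe_branch (n : ℕ) (x : UnitIrrational) : (branch n x : ℝ) = 1 / (n + 1 + x) := rfl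

/-- The Gauss map on the irrational numbers of the unit interval. -/
def gauss (x : UnitIrrational) : UnitIrrational where
  val := Int.fract (1 / (x : ℝ))
  property := by
    have hirr : Irrational (Int.fract (1 / (x : ℝ))) := x.irrational_one_div.sub_intCast _
    exact ⟨⟨(Int.fract_nonneg _).lt_of_ne' hirr.ne_zero, Int.fract_lt_one _⟩, hirr⟩

lemma coe_gauss (x : UnitIrrational) : (gauss x : ℝ) = Int.fract (1 / (x : ℝ)) := rfl

/-- The index of the inverse branch of the Gauss map containing `x`. It is one less than the first
partial quotient `⌊1 / x⌋`. -/
def digit (x : UnitIrrational) : ℕ := ⌊1 / (x : ℝ)⌋₊ - 1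

lemma digit_add_one (x : UnitIrrational) : (digit x : ℝ) + 1 = ⌊1 / (x : ℝ)⌋ := by
  have hfloor : 1 ≤ ⌊1 / (x : ℝ)⌋₊ := Nat.le_floor (by simpa using x.one_lt_one_div.le)
  rw [← natCast_floor_eq_intCast_floor (zero_le_one.trans x.one_lt_one_div.le), digit,
    Nat.cast_sub hfloor, Nat.cast_one, sub_add_cancel]

lemma digit_add_one_add_gauss (x : UnitIrrational) :
    (digit x : ℝ) + 1 + gauss x = 1 / (x : ℝ) := by
  rw [digit_add_one]
  exact Int.floor_add_fract _

@[simp] lemma branch_digit_gauss (x : UnitIrrational) : branch (digit x) (gauss x) = x :=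
  Subtype.ext <| by rw [coe_branch, digit_add_one_add_gauss, one_div_one_div]

@[simp] lemma digit_branch (n : ℕ) (x : UnitIrrational) : digit (branch n x) = n := by
  have hfloor : ⌊(n + 1 : ℝ) + x⌋₊ = n + 1 := by
    have hx := x.pos
    rw [Nat.floor_eq_iff (by positivity)]
    push_cast
    exact ⟨by linarith, by linarith [x.lt_one]⟩
  rw [digit, coe_branch, one_div_one_div, hfloor, Nat.add_sub_cancel]

@[simp] lemma gauss_branch (n : ℕ) (x : UnitIrrational) : gauss (branch n x) = x := by
  refine Subtype.ext ?_
  rw [coe_gauss, coe_branch, one_div_one_div, Int.fract_eq_iff]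
  exact ⟨x.pos.le, x.lt_one, n + 1, by push_cast; ring⟩

lemma measurable_branch (n : ℕ) : Measurable (branch n) := .subtype_mk (by fun_prop)

lemma measurable_digit : Measurable digit := by
  have hfloor : Measurable fun x : UnitIrrational => ⌊1 / (x : ℝ)⌋₊ := by fun_prop
  exact (measurable_of_countable (· - 1)).comp hfloor

lemma measurable_gauss : Measurable gauss :=
  .subtype_mk (measurable_fract.comp (by fun_prop))

lemma measurable_branch_digit :
    Measurable fun p : UnitIrrational × UnitIrrational => branch (digit p.2) p.1 := by
  have hdigit := measurable_digit
  exact .subtype_mk (by fun_prop)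

end GaussMap

section Volume

lemma measurableSet_unitIrrationals : MeasurableSet unitIrrationals :=
  measurableSet_Ioo.inter (countable_range ((↑) : ℚ → ℝ)).measurableSet.compl

lemma volume_unitIrrationals : volume unitIrrationals = 1 := by
  have hdiff : unitIrrationals = Ioo (0 : ℝ) 1 \ range ((↑) : ℚ → ℝ) := rfl
  rw [hdiff, measure_sdiff_null ((countable_range _).measure_zero _)]
  simp

instance : MeasureSpace UnitIrrational := Measure.Subtype.measureSpace

instance : IsProbabilityMeasure (volume : Measure UnitIrrational) where
  measure_univ := by
    rw [Measure.Subtype.volume_univ measurableSet_unitIrrationals.nullMeasurableSet,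
      volume_unitIrrationals]

instance : NullSingletonClass (volume : Measure UnitIrrational) where
  measure_singleton x := by
    change Measure.comap Subtype.val volume {x} = 0
    rw [comap_subtype_coe_apply measurableSet_unitIrrationals, image_singleton, measure_singleton]

end Volume

section NaturalExtension

/-- The absolute value of the derivative of `branch n`. -/
def branchJacobian (n : ℕ) (x : UnitIrrational) : ENNReal := .ofReal (1 / (n + 1 + x) ^ 2)

lemma measurable_branchJacobian (n : ℕ) : Measurable (branchJacobian n) := by
  unfold branchJacobian
  fun_prop

lemma image_val_digit_preimage_singleton (n : ℕ) :
    Subtype.val '' (digit ⁻¹' {n}) = (fun t : ℝ => 1 / (n + 1 + t)) '' unitIrrationals := by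
  ext t
  constructor
  · rintro ⟨x, rfl, rfl⟩
    exact ⟨gauss x, (gauss x).2, congrArg Subtype.val (branch_digit_gauss x)⟩
  · rintro ⟨x, hx, rfl⟩
    exact ⟨branch n ⟨x, hx⟩, digit_branch _ _, rfl⟩

lemma setLIntegral_digit_preimage_singleton (f : UnitIrrational → ENNReal) (n : ℕ) :
    ∫⁻ x in digit ⁻¹' {n}, f x = ∫⁻ x, branchJacobian n x * f (branch n x) := by
  let F : ℝ → ENNReal := Function.extend Subtype.val f 0
  have hF : ∀ x : UnitIrrational, f x = F x := fun x =>
    (Subtype.val_injective.extend_apply f 0 x).symm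
  have hderiv : ∀ t ∈ unitIrrationals, HasDerivWithinAt (fun t : ℝ => 1 / (n + 1 + t))
      (-1 / (n + 1 + t) ^ 2) unitIrrationals t := fun t ht => by
    have := (hasDerivAt_id t).const_add (n + 1 : ℝ) |>.inv
      (by have := ht.1.1; dsimp only [id]; positivity)
    simpa [one_div] using! this.hasDerivWithinAt
  have hinj : InjOn (fun t : ℝ => 1 / (n + 1 + t)) unitIrrationals := fun s _ t _ h => by
    simpa using h
  calc ∫⁻ x in digit ⁻¹' {n}, f x
      = ∫⁻ t in (fun t : ℝ => 1 / (n + 1 + t)) '' unitIrrationals, F t := by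
        rw [← image_val_digit_preimage_singleton]
        simp only [hF]
        exact setLIntegral_subtype measurableSet_unitIrrationals _ F
    _ = ∫⁻ t in unitIrrationals, .ofReal |-1 / (n + 1 + t) ^ 2| * F (1 / (n + 1 + t)) :=
        lintegral_image_eq_lintegral_abs_deriv_mul measurableSet_unitIrrationals hderiv hinj F
    _ = ∫⁻ x, branchJacobian n x * f (branch n x) := by
        refine (lintegral_subtype_comap measurableSet_unitIrrationals _).symm.trans
          (lintegral_congr fun x => ?_)
        rw [hF, coe_branch, branchJacobian, abs_div, abs_neg, abs_one, abs_sq]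

lemma lintegral_eq_tsum_branch (f : UnitIrrational → ENNReal) :
    ∫⁻ x, f x = ∑' n, ∫⁻ x, branchJacobian n x * f (branch n x) := by
  simp only [← setLIntegral_digit_preimage_singleton]
  have hunion : ⋃ n, digit ⁻¹' {n} = univ := by ext; simp
  rw [← setLIntegral_univ, ← hunion]
  exact lintegral_iUnion (fun n => measurable_digit (measurableSet_singleton n))
    (pairwise_disjoint_fiber digit) f

/-- The density of `mu2`, on pairs of irrational numbers. -/
def naturalExtensionDensity (p : UnitIrrational × UnitIrrational) : ENNReal :=
  .ofReal (1 / (Real.log 2 * (1 + (p.1 : ℝ) * p.2) ^ 2))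

lemma measurable_naturalExtensionDensity : Measurable naturalExtensionDensity := by
  unfold naturalExtensionDensity
  fun_prop

/-- The measure `mu2`, on pairs of irrational numbers. -/
def naturalExtensionMeasure : Measure (UnitIrrational × UnitIrrational) :=
  volume.withDensity naturalExtensionDensity

lemma lintegral_naturalExtensionMeasure {f : UnitIrrational × UnitIrrational → ENNReal}
    (hf : Measurable f) : ∫⁻ p, f p ∂naturalExtensionMeasure =
      ∫⁻ x, ∫⁻ y, naturalExtensionDensity (x, y) * f (x, y) := by
  have hρ := measurable_naturalExtensionDensity
  rw [naturalExtensionMeasure, lintegral_withDensity_eq_lintegral_mul _ hρ hf,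
    Measure.volume_eq_prod, lintegral_prod _ (hρ.mul hf).aemeasurable]
  rfl

/-- The natural extension of the Gauss map, on pairs of irrational numbers. -/
def naturalExtension (p : UnitIrrational × UnitIrrational) : UnitIrrational × UnitIrrational :=
  (branch (digit p.2) p.1, gauss p.2)

lemma measurable_naturalExtension : Measurable naturalExtension :=
  measurable_branch_digit.prodMk (measurable_gauss.comp measurable_snd)

lemma branchJacobian_mul_density (n : ℕ) (x y : UnitIrrational) :
    branchJacobian n y * naturalExtensionDensity (x, branch n y) =
      branchJacobian n x * naturalExtensionDensity (branch n x, y) := by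
  have hx := x.pos
  have hy := y.pos
  have hlog : Real.log 2 ≠ 0 := (Real.log_pos one_lt_two).ne'
  unfold branchJacobian naturalExtensionDensity
  rw [← ENNReal.ofReal_mul (by positivity), ← ENNReal.ofReal_mul (by positivity)]
  congr 1
  simp only [coe_branch]
  field_simp
  ring

lemma measurePreserving_naturalExtension :
    MeasurePreserving naturalExtension naturalExtensionMeasure naturalExtensionMeasure := by
  have hG := measurable_naturalExtension
  have hρ := measurable_naturalExtensionDensity
  refine ⟨hG, Measure.ext_of_lintegral _ fun f hf => ?_⟩
  have hn (n : ℕ) : Measurable fun p : UnitIrrational × UnitIrrational =>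
      branchJacobian n p.2 *
        (naturalExtensionDensity (p.1, branch n p.2) * f (branch n p.1, p.2)) := by
    have hj := measurable_branchJacobian n
    have hb := measurable_branch n
    fun_prop
  calc ∫⁻ p, f p ∂naturalExtensionMeasure.map naturalExtension
      = ∫⁻ x, ∫⁻ y, naturalExtensionDensity (x, y) * f (naturalExtension (x, y)) := by
        rw [lintegral_map hf hG, lintegral_naturalExtensionMeasure (f := fun p => f _)
          (hf.comp hG)]
    _ = ∫⁻ x, ∑' n, ∫⁻ y, branchJacobian n y *
          (naturalExtensionDensity (x, branch n y) * f (branch n x, y)) := by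
        refine lintegral_congr fun x => (lintegral_eq_tsum_branch _).trans ?_
        simp only [naturalExtension, digit_branch, gauss_branch]
    _ = ∑' n, ∫⁻ x, ∫⁻ y, branchJacobian n y *
          (naturalExtensionDensity (x, branch n y) * f (branch n x, y)) :=
        lintegral_tsum fun n => (hn n).lintegral_prod_right'.aemeasurable
    _ = ∑' n, ∫⁻ x, branchJacobian n x *
          ∫⁻ y, naturalExtensionDensity (branch n x, y) * f (branch n x, y) := by
        refine tsum_congr fun n => lintegral_congr fun x => ?_
        rw [← lintegral_const_mul _ (by fun_prop)]
        simp only [← mul_assoc, branchJacobian_mul_density]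
    _ = ∫⁻ p, f p ∂naturalExtensionMeasure := by
        rw [lintegral_naturalExtensionMeasure hf, lintegral_eq_tsum_branch]

end NaturalExtension

section Cocycle

variable (x y : UnitIrrational)

lemma one_add_mul_pos : 0 < 1 + (x : ℝ) * y := by
  have hx := x.pos
  have hy := y.pos
  positivity

lemma log_lt_zero : Real.log x < 0 := Real.log_neg x.pos x.lt_one

lemma mul_gauss_le_half : (y : ℝ) * gauss y ≤ 1 / 2 := by
  have hy := y.pos
  have hdigit : (y : ℝ) * (digit y + 1 + gauss y) = 1 := by
    rw [digit_add_one_add_gauss, mul_one_div_cancel hy.ne']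
  nlinarith [(gauss y).pos, (gauss y).lt_one, (digit y).cast_nonneg (α := ℝ)]

lemma branch_mul_branch_le_half (m n : ℕ) : (branch m x : ℝ) * branch n (branch m x) ≤ 1 / 2 := by
  simpa [mul_comm] using mul_gauss_le_half (branch n (branch m x))

lemma log_add_log_gauss_le : Real.log y + Real.log (gauss y) ≤ -Real.log 2 := by
  have hlog := Real.log_le_log (mul_pos y.pos (gauss y).pos) (mul_gauss_le_half y)
  rwa [Real.log_mul y.pos.ne' (gauss y).pos.ne', one_div, Real.log_inv] at hlog

lemma one_add_branch_mul_gauss_mul :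
    (1 + (branch (digit y) x : ℝ) * gauss y) * y = (1 + x * y) * branch (digit y) x := by
  have hx := x.pos
  have hy := y.pos
  have hdigit : (gauss y : ℝ) = 1 / y - (digit y + 1) := by
    rw [← digit_add_one_add_gauss y, add_sub_cancel_left]
  rw [hdigit, coe_branch]
  field_simp
  ring

lemma log_one_add_branch_mul_gauss :
    Real.log (1 + branch (digit y) x * gauss y) + Real.log y =
      Real.log (1 + x * y) + Real.log (branch (digit y) x) := by
  rw [← Real.log_mul (one_add_mul_pos _ _).ne' y.pos.ne', one_add_branch_mul_gauss_mul,
    Real.log_mul (one_add_mul_pos _ _).ne' (branch (digit y) x).pos.ne']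

variable {x} in
lemma abs_branch_sub_branch (n : ℕ) (x' : UnitIrrational) :
    |(branch n x : ℝ) - branch n x'| = branch n x * branch n x' * |(x : ℝ) - x'| := by
  have hx := x.pos
  have hx' := x'.pos
  have hsub : (branch n x : ℝ) - branch n x' = branch n x * branch n x' * -(x - x') := by
    simp only [coe_branch]
    field_simp
    ring
  rw [hsub, abs_mul, abs_neg, abs_of_pos (mul_pos (branch n x).pos (branch n x').pos)]

end Cocycle

section Cover

/-- The space covering the phase space of the special flow: the special flow is the quotient of the
translation flow `translate` by the powers of `deck`. -/
abbrev Cover : Type := (UnitIrrational × UnitIrrational) × ℝ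

/-- The generator of the deck transformations, identifying the top of the region under the roof
with its bottom by the natural extension. -/
def deck : Cover ≃ᵐ Cover where
  toFun q := (naturalExtension q.1, q.2 + Real.log (branch (digit q.1.2) q.1.1))
  invFun q := ((gauss q.1.1, branch (digit q.1.1) q.1.2), q.2 - Real.log q.1.1)
  left_inv := fun ⟨⟨x, y⟩, s⟩ => by simp [naturalExtension]
  right_inv := fun ⟨⟨x, y⟩, s⟩ => by simp [naturalExtension]
  measurable_toFun := by
    have hlog := Real.measurable_log.comp (measurable_subtype_coe.comp measurable_branch_digit)
    exact (measurable_naturalExtension.comp measurable_fst).prodMk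
      (measurable_snd.add (hlog.comp measurable_fst))
  measurable_invFun := by
    have hgauss := measurable_gauss
    have hbranch := measurable_branch_digit.comp measurable_swap
    refine .prodMk (.prodMk (by fun_prop) (hbranch.comp measurable_fst)) (by fun_prop)

/-- The lift to the cover of the special flow. -/
def translate (t : ℝ) : Cover ≃ᵐ Cover :=
  .prodCongr (.refl _) (.addRight t)

/-- The time reversal. Exchanging past and future, it conjugates the flow to its inverse. -/
def reversal : Cover ≃ᵐ Cover where
  toFun q := (q.1.swap, Real.log (1 + q.1.1 * q.1.2) - q.2)
  invFun q := (q.1.swap, Real.log (1 + q.1.1 * q.1.2) - q.2)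
  left_inv := fun ⟨⟨x, y⟩, s⟩ => by simp [mul_comm]
  right_inv := fun ⟨⟨x, y⟩, s⟩ => by simp [mul_comm]
  measurable_toFun := by dsimp only [Equiv.coe_fn_mk]; fun_prop
  measurable_invFun := by dsimp only [Equiv.coe_fn_symm_mk]; fun_prop

/-- The height of a point relative to its stable leaf, see `slide`. -/
def stableHeight (q : Cover) : ℝ := q.2 - Real.log (1 + q.1.1 * q.1.2)

/-- The point with first coordinate `x'` on the stable leaf of `q`. The stable leaves are the sets
on which the second coordinate and `stableHeight` are constant; `deck` contracts them, and maps
leaves to leaves. -/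
def slide (x' : UnitIrrational) (q : Cover) : Cover :=
  ((x', q.1.2), stableHeight q + Real.log (1 + x' * q.1.2))

/-- The displacement in time between the points with first coordinates `x` and `x'` on a stable
leaf with second coordinate `y`. -/
def leafShift (x x' y : UnitIrrational) : ℝ := Real.log (1 + x' * y) - Real.log (1 + x * y)

section Relations

variable (q : Cover) (t : ℝ) (x' : UnitIrrational)

lemma deck_apply : deck q = (naturalExtension q.1, q.2 + Real.log (branch (digit q.1.2) q.1.1)) :=
  rfl

lemma translate_apply : translate t q = (q.1, q.2 + t) := rfl

lemma reversal_apply : reversal q = (q.1.swap, Real.log (1 + q.1.1 * q.1.2) - q.2) := rfl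

lemma reversal_reversal : reversal (reversal q) = q := reversal.left_inv q

lemma translate_deck : translate t (deck q) = deck (translate t q) :=
  Prod.ext rfl (add_right_comm _ _ _)

lemma translate_translate_neg : translate t (translate (-t) q) = q :=
  Prod.ext rfl (neg_add_cancel_right _ _)

lemma reversal_translate : reversal (translate t q) = translate (-t) (reversal q) :=
  Prod.ext rfl (by simp only [reversal_apply, translate_apply]; ring)

lemma deck_reversal_deck : deck (reversal (deck q)) = reversal q := by
  simp only [deck_apply, reversal_apply, naturalExtension, Prod.swap, digit_branch, gauss_branch,
    branch_digit_gauss, Prod.mk.injEq, true_and]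
  linarith [log_one_add_branch_mul_gauss q.1.1 q.1.2]

lemma stableHeight_deck : stableHeight (deck q) = stableHeight q + Real.log q.1.2 := by
  simp only [stableHeight, deck_apply, naturalExtension]
  linarith [log_one_add_branch_mul_gauss q.1.1 q.1.2]

lemma stableHeight_translate : stableHeight (translate t q) = stableHeight q + t :=
  add_sub_right_comm _ _ _

lemma stableHeight_slide : stableHeight (slide x' q) = stableHeight q := by
  simp only [stableHeight, slide]
  ring

lemma slide_slide (x'' : UnitIrrational) : slide x'' (slide x' q) = slide x'' q := by
  rw [slide, stableHeight_slide]
  rfl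

lemma slide_self : slide q.1.1 q = q := Prod.ext rfl (sub_add_cancel _ _)

lemma slide_eq_leafShift : slide x' q = ((x', q.1.2), q.2 + leafShift q.1.1 x' q.1.2) :=
  Prod.ext rfl (by simp only [slide, stableHeight, leafShift]; ring)

lemma slide_translate : slide x' (translate t q) = translate t (slide x' q) := by
  rw [slide, stableHeight_translate]
  exact Prod.ext rfl (add_right_comm _ _ _)

lemma deck_slide : deck (slide x' q) = slide (branch (digit q.1.2) x') (deck q) := by
  rw [slide, slide, stableHeight_deck]
  refine Prod.ext rfl ?_
  simp only [deck_apply, naturalExtension]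
  linarith [log_one_add_branch_mul_gauss x' q.1.2]

lemma reversal_slide_reversal : reversal (slide x' (reversal q)) = ((q.1.1, x'), q.2) := by
  refine Prod.ext rfl ?_
  simp only [slide, stableHeight, reversal_apply, Prod.swap, mul_comm]
  ring

lemma height_deck_lt : (deck q).2 < q.2 := add_lt_of_neg_right _ (log_lt_zero _)

lemma height_deck_deck_le : (deck (deck q)).2 ≤ q.2 - Real.log 2 := by
  simp only [deck_apply, naturalExtension]
  have hlog := log_add_log_gauss_le
    (branch (digit (gauss q.1.2)) (branch (digit q.1.2) q.1.1))
  rw [gauss_branch] at hlog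
  linarith

lemma stableHeight_deck_lt : stableHeight (deck q) < stableHeight q := by
  rw [stableHeight_deck]
  exact add_lt_of_neg_right _ (log_lt_zero _)

lemma stableHeight_deck_deck_le : stableHeight (deck (deck q)) ≤ stableHeight q - Real.log 2 := by
  rw [stableHeight_deck, stableHeight_deck]
  have hlog := log_add_log_gauss_le q.1.2
  simp only [deck_apply, naturalExtension]
  linarith

end Relations

lemma leafShift_injective {x x' : UnitIrrational} (h : x ≠ x') :
    Function.Injective (leafShift x x') := by
  intro y y' hy
  have hlog : Real.log ((1 + x' * y) * (1 + x * y')) =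
      Real.log ((1 + x' * y') * (1 + x * y)) := by
    rw [Real.log_mul (one_add_mul_pos _ _).ne' (one_add_mul_pos _ _).ne',
      Real.log_mul (one_add_mul_pos _ _).ne' (one_add_mul_pos _ _).ne']
    simp only [leafShift] at hy
    linarith
  have heq := Real.log_injOn_pos (mul_pos (one_add_mul_pos _ _) (one_add_mul_pos _ _))
    (mul_pos (one_add_mul_pos _ _) (one_add_mul_pos _ _)) hlog
  have hprod : ((x' : ℝ) - x) * (y - y') = 0 := by linear_combination heq
  rcases mul_eq_zero.1 hprod with hx | hy
  · exact absurd (Subtype.ext (sub_eq_zero.1 hx).symm) h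
  · exact Subtype.ext (sub_eq_zero.1 hy)

lemma exists_deck_pow_slide (n : ℕ) (x' : UnitIrrational) (q : Cover) :
    ∃ x'', (deck.toEquiv ^ n : Equiv.Perm Cover) (slide x' q) =
        slide x'' ((deck.toEquiv ^ n : Equiv.Perm Cover) q) ∧
      |(x'' : ℝ) - ((deck.toEquiv ^ n : Equiv.Perm Cover) q).1.1| ≤
        2 * (1 / 2) ^ n * |(x' : ℝ) - q.1.1| := by
  induction n using Nat.twoStepInduction generalizing x' q with
  | zero => exact ⟨x', rfl, by simpa using le_mul_of_one_le_left (abs_nonneg _) one_le_two⟩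
  | one =>
    refine ⟨branch (digit q.1.2) x', deck_slide q x', ?_⟩
    calc |(branch (digit q.1.2) x' : ℝ) - branch (digit q.1.2) q.1.1|
        = branch (digit q.1.2) x' * branch (digit q.1.2) q.1.1 * |(x' : ℝ) - q.1.1| :=
          abs_branch_sub_branch _ _
      _ ≤ 2 * (1 / 2) ^ 1 * |(x' : ℝ) - q.1.1| := by
        refine mul_le_mul_of_nonneg_right ?_ (abs_nonneg _)
        rw [pow_one, mul_one_div_cancel two_ne_zero]
        exact mul_le_one₀ (branch _ _).lt_one.le (branch _ _).pos.le (branch _ _).lt_one.le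
  | more n ih _ =>
    have hpow : ∀ q, (deck.toEquiv ^ (n + 2) : Equiv.Perm Cover) q =
        (deck.toEquiv ^ n : Equiv.Perm Cover) (deck (deck q)) := fun q => by
      rw [pow_add, Equiv.Perm.mul_apply]
      rfl
    set k := digit q.1.2
    set m := digit (gauss q.1.2)
    obtain ⟨x'', hx'', hle⟩ := ih (branch m (branch k x')) (deck (deck q))
    refine ⟨x'', by rw [hpow, hpow, deck_slide, deck_slide, ← hx'']; rfl, ?_⟩
    rw [hpow]
    calc _ ≤ 2 * (1 / 2) ^ n * |(branch m (branch k x') : ℝ) - branch m (branch k q.1.1)| := hle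
      _ = 2 * (1 / 2) ^ n * ((branch k x' * branch m (branch k x')) *
            (branch k q.1.1 * branch m (branch k q.1.1)) * |(x' : ℝ) - q.1.1|) := by
        rw [abs_branch_sub_branch, abs_branch_sub_branch]
        ring
      _ ≤ 2 * (1 / 2) ^ n * (1 / 2 * (1 / 2) * |(x' : ℝ) - q.1.1|) := by
        have hpos := mul_pos (branch k q.1.1).pos (branch m (branch k q.1.1)).pos
        gcongr <;> exact branch_mul_branch_le_half _ _ _
      _ = 2 * (1 / 2) ^ (n + 2) * |(x' : ℝ) - q.1.1| := by ring

end Cover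

section PhaseSpace

lemma measurePreserving_prod_add {X Y : Type*} [MeasurableSpace X] [MeasurableSpace Y]
    {μ : Measure X} [SFinite μ] {ν : Measure Y} {f : X → Y} (hf : MeasurePreserving f μ ν)
    {g : X → ℝ} (hg : Measurable g) :
    MeasurePreserving (fun p : X × ℝ => (f p.1, p.2 + g p.1)) (μ.prod volume) (ν.prod volume) :=
  hf.skew_product (g := fun x s => s + g x) (by fun_prop)
    (ae_of_all _ fun x => (measurePreserving_add_right volume (g x)).map_eq)

instance : SFinite naturalExtensionMeasure :=
  inferInstanceAs (SFinite (volume.withDensity naturalExtensionDensity))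

/-- The lift to the cover of the invariant measure of the special flow, before normalization. -/
def coverMeasure : Measure Cover := naturalExtensionMeasure.prod volume

lemma measurePreserving_deck : MeasurePreserving deck coverMeasure coverMeasure :=
  measurePreserving_prod_add measurePreserving_naturalExtension
    (Real.measurable_log.comp (measurable_subtype_coe.comp measurable_branch_digit))

lemma measurePreserving_translate (t : ℝ) :
    MeasurePreserving (translate t) coverMeasure coverMeasure :=
  measurePreserving_prod_add (.id _) measurable_const

lemma measurePreserving_swap_naturalExtensionMeasure :
    MeasurePreserving Prod.swap naturalExtensionMeasure naturalExtensionMeasure := by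
  refine ⟨measurable_swap, Measure.ext fun s hs => ?_⟩
  have hswap : ∀ p, naturalExtensionDensity p = naturalExtensionDensity p.swap := fun p => by
    simp only [naturalExtensionDensity, Prod.fst_swap, Prod.snd_swap, mul_comm (p.1 : ℝ)]
  rw [Measure.map_apply measurable_swap hs, naturalExtensionMeasure,
    withDensity_apply _ (measurable_swap hs), withDensity_apply _ hs, lintegral_congr hswap]
  exact Measure.measurePreserving_swap.setLIntegral_comp_preimage hs
    measurable_naturalExtensionDensity

lemma measurePreserving_reversal : MeasurePreserving reversal coverMeasure coverMeasure :=
  measurePreserving_swap_naturalExtensionMeasure.skew_product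
    (g := fun p s => Real.log (1 + p.1 * p.2) - s) (by fun_prop)
    (ae_of_all _ fun p => (Measure.measurePreserving_sub_left volume _).map_eq)

lemma volume_absolutelyContinuous_coverMeasure : volume ≪ coverMeasure := by
  refine Measure.AbsolutelyContinuous.prod ?_ .rfl
  refine withDensity_absolutelyContinuous' measurable_naturalExtensionDensity.aemeasurable
    (ae_of_all _ fun p => ?_)
  have hpos := one_add_mul_pos p.1 p.2
  rw [naturalExtensionDensity, Ne, ENNReal.ofReal_eq_zero, not_le]
  positivity

lemma coverMeasure_absolutelyContinuous_volume : coverMeasure ≪ volume :=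
  (withDensity_absolutelyContinuous _ _).prod .rfl

/-- The group generated by `deck`. -/
abbrev DeckGroup : Subgroup (Equiv.Perm Cover) := Subgroup.zpowers deck.toEquiv

instance : MeasurableConstSMul DeckGroup Cover :=
  measurableConstSMul_zpowers measurePreserving_deck

instance : SMulInvariantMeasure DeckGroup Cover coverMeasure :=
  smulInvariantMeasure_zpowers measurePreserving_deck

/-- The region under the roof, in the cover. -/
def phaseSpace : Set Cover := {q | 0 ≤ q.2 ∧ (deck q).2 < 0}

lemma measurableSet_phaseSpace : MeasurableSet phaseSpace :=
  (measurableSet_le measurable_const measurable_snd).inter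
    (measurableSet_lt (measurable_snd.comp deck.measurable) measurable_const)

lemma isStrictFundamentalDomain_phaseSpace : IsStrictFundamentalDomain DeckGroup phaseSpace :=
  isStrictFundamentalDomain_zpowers_of_height deck.toEquiv (Real.log_pos one_lt_two)
    height_deck_lt height_deck_deck_le 0

lemma neg_log_branch_digit_le (x y : UnitIrrational) :
    -Real.log (branch (digit y) x) ≤ Real.log 2 - Real.log y := by
  have hle : 1 / (branch (digit y) x : ℝ) ≤ 2 / y := by
    have hsum := digit_add_one_add_gauss y
    have hone := y.one_lt_one_div
    rw [coe_branch, one_div_one_div, ← mul_one_div]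
    linarith [x.lt_one, (gauss y).pos]
  have hlog := Real.log_le_log (one_div_pos.2 (branch (digit y) x).pos) hle
  rwa [one_div, Real.log_inv, Real.log_div two_ne_zero y.pos.ne'] at hlog

lemma naturalExtensionDensity_le (p : UnitIrrational × UnitIrrational) :
    naturalExtensionDensity p ≤ .ofReal (1 / Real.log 2) := by
  refine ENNReal.ofReal_le_ofReal (one_div_le_one_div_of_le (Real.log_pos one_lt_two) ?_)
  refine le_mul_of_one_le_right (Real.log_pos one_lt_two).le (one_le_pow₀ ?_)
  exact le_add_of_nonneg_right (mul_pos p.1.pos p.2.pos).le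

lemma integrable_log_unitIrrational : Integrable fun y : UnitIrrational => Real.log y := by
  have hIoc : IntegrableOn Real.log (Ioc 0 1) :=
    (intervalIntegrable_iff_integrableOn_Ioc_of_le zero_le_one).1
      intervalIntegral.intervalIntegrable_log'
  exact (measurePreserving_subtype_coe measurableSet_unitIrrationals).integrable_comp_of_integrable
    (hIoc.mono_set fun y hy => Ioo_subset_Ioc_self hy.1)

lemma measurable_neg_log_branch : Measurable fun p : UnitIrrational × UnitIrrational =>
    -Real.log (branch (digit p.2) p.1) :=
  (Real.measurable_log.comp (measurable_subtype_coe.comp measurable_branch_digit)).neg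

lemma integrable_neg_log_branch :
    Integrable (fun p => -Real.log (branch (digit p.2) p.1)) naturalExtensionMeasure := by
  have hle : naturalExtensionMeasure ≤ ENNReal.ofReal (1 / Real.log 2) • volume := by
    rw [← withDensity_const]
    exact withDensity_mono (ae_of_all _ naturalExtensionDensity_le)
  have hint : Integrable (fun p : UnitIrrational × UnitIrrational => Real.log 2 - Real.log p.2)
      (ENNReal.ofReal (1 / Real.log 2) • volume) :=
    (((integrable_const _).sub integrable_log_unitIrrational).comp_snd _).smul_measure
      ENNReal.ofReal_ne_top
  refine (hint.mono_measure hle).mono' measurable_neg_log_branch.aestronglyMeasurable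
    (ae_of_all _ fun p => ?_)
  rw [Real.norm_of_nonneg (neg_nonneg.2 (log_lt_zero _).le)]
  exact neg_log_branch_digit_le p.1 p.2

lemma coverMeasure_phaseSpace : coverMeasure phaseSpace =
    .ofReal (∫ p, -Real.log (branch (digit p.2) p.1) ∂naturalExtensionMeasure) := by
  rw [ofReal_integral_eq_lintegral_ofReal integrable_neg_log_branch
    (ae_of_all _ fun p => neg_nonneg.2 (log_lt_zero _).le), coverMeasure,
    Measure.prod_apply measurableSet_phaseSpace]
  refine lintegral_congr fun p => ?_
  have hfiber : Prod.mk p ⁻¹' phaseSpace = Ico 0 (-Real.log (branch (digit p.2) p.1)) := by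
    ext s
    exact and_congr_right fun _ => lt_neg_iff_add_neg.symm
  rw [hfiber, Real.volume_Ico, sub_zero]

lemma coverMeasure_phaseSpace_ne_top : coverMeasure phaseSpace ≠ ⊤ := by
  rw [coverMeasure_phaseSpace]
  exact ENNReal.ofReal_ne_top

lemma coverMeasure_phaseSpace_ne_zero : coverMeasure phaseSpace ≠ 0 := by
  refine (isStrictFundamentalDomain_phaseSpace.isFundamentalDomain measurableSet_phaseSpace
    coverMeasure).measure_ne_zero fun h => ?_
  have hvol : (volume : Measure Cover) univ = 0 :=
    volume_absolutelyContinuous_coverMeasure (by rw [h, Measure.coe_zero, Pi.zero_apply])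
  rw [← univ_prod_univ, Measure.volume_eq_prod, Measure.prod_prod, measure_univ, one_mul,
    Real.volume_univ] at hvol
  exact ENNReal.top_ne_zero hvol

/-- The invariant probability measure of the special flow, as a measure on the cover carried by
`phaseSpace`. -/
def flowMeasure : Measure Cover := ProbabilityTheory.cond coverMeasure phaseSpace

instance : IsProbabilityMeasure flowMeasure :=
  ProbabilityTheory.cond_isProbabilityMeasure_of_finite coverMeasure_phaseSpace_ne_zero
    coverMeasure_phaseSpace_ne_top

lemma ae_mem_phaseSpace : ∀ᵐ q ∂flowMeasure, q ∈ phaseSpace :=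
  ProbabilityTheory.ae_cond_mem measurableSet_phaseSpace

lemma flowMeasure_absolutelyContinuous_volume : flowMeasure ≪ volume :=
  ProbabilityTheory.cond_absolutelyContinuous.trans coverMeasure_absolutelyContinuous_volume

/-- The projection of the cover onto the phase space of the special flow. -/
def project : Cover → Cover := isStrictFundamentalDomain_phaseSpace.reduce

lemma quasiMeasurePreserving_project :
    Measure.QuasiMeasurePreserving project volume flowMeasure :=
  ((isStrictFundamentalDomain_phaseSpace.quasiMeasurePreserving_reduce
    measurableSet_phaseSpace).mono_left volume_absolutelyContinuous_coverMeasure).mono_right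
    (Measure.AbsolutelyContinuous.rfl.smul_right (by simpa using coverMeasure_phaseSpace_ne_top))

end PhaseSpace

section SpecialFlow

lemma smul_translate (t : ℝ) (g : DeckGroup) (q : Cover) :
    translate t (g • q) = g • translate t q :=
  zpowers_smul_comm (T := (translate t).toEquiv) (fun q => translate_deck q t) g q

lemma smul_reversal (g : DeckGroup) (q : Cover) : reversal (g • q) = g⁻¹ • reversal q :=
  zpowers_smul_comm_inv (T := reversal.toEquiv) deck_reversal_deck g q

/-- The special flow on `phaseSpace`. -/
def specialFlow (t : ℝ) (q : Cover) : Cover := project (translate t q)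

/-- The time reversal on `phaseSpace`. -/
def flowReversal (q : Cover) : Cover := project (reversal q)

lemma measurePreserving_specialFlow (t : ℝ) :
    MeasurePreserving (specialFlow t) flowMeasure flowMeasure :=
  (isStrictFundamentalDomain_phaseSpace.measurePreserving_reduce_comp measurableSet_phaseSpace
    (measurePreserving_translate t) (.refl _) (smul_translate t)).smul_measure _

lemma measurePreserving_flowReversal : MeasurePreserving flowReversal flowMeasure flowMeasure :=
  (isStrictFundamentalDomain_phaseSpace.measurePreserving_reduce_comp measurableSet_phaseSpace
    measurePreserving_reversal (.inv _) smul_reversal).smul_measure _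

lemma specialFlow_project (t : ℝ) (q : Cover) :
    specialFlow t (project q) = project (translate t q) :=
  isStrictFundamentalDomain_phaseSpace.reduce_map_reduce (smul_translate t) q

lemma flowReversal_project (q : Cover) : flowReversal (project q) = project (reversal q) :=
  isStrictFundamentalDomain_phaseSpace.reduce_map_reduce smul_reversal q

lemma project_of_mem {q : Cover} (hq : q ∈ phaseSpace) : project q = q :=
  isStrictFundamentalDomain_phaseSpace.reduce_of_mem hq

/-- The Koopman operators of the special flow. -/
def koopman (t : ℝ) : Lp ℝ 2 flowMeasure →ₗᵢ[ℝ] Lp ℝ 2 flowMeasure :=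
  Lp.compMeasurePreservingₗᵢ ℝ (specialFlow t) (measurePreserving_specialFlow t)

/-- The Koopman operator of the time reversal. -/
def koopmanReversal : Lp ℝ 2 flowMeasure →ₗᵢ[ℝ] Lp ℝ 2 flowMeasure :=
  Lp.compMeasurePreservingₗᵢ ℝ flowReversal measurePreserving_flowReversal

lemma ae_koopman_project (t : ℝ) (f : Lp ℝ 2 flowMeasure) :
    ∀ᵐ q, koopman t f (project q) = f (project (translate t q)) := by
  filter_upwards [quasiMeasurePreserving_project.ae
    (Lp.coeFn_compMeasurePreserving f (measurePreserving_specialFlow t))] with q hq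
  rw [← specialFlow_project]
  exact hq

lemma ae_koopmanReversal_project (f : Lp ℝ 2 flowMeasure) :
    ∀ᵐ q, koopmanReversal f (project q) = f (project (reversal q)) := by
  filter_upwards [quasiMeasurePreserving_project.ae
    (Lp.coeFn_compMeasurePreserving f measurePreserving_flowReversal)] with q hq
  rw [← flowReversal_project]
  exact hq

lemma isTimeReversal_koopmanReversal : IsTimeReversal koopman koopmanReversal where
  inner_flow t := inner_compMeasurePreservingₗᵢ_left _ _ <| by
    filter_upwards [ae_mem_phaseSpace] with q hq
    change specialFlow t (project (translate (-t) q)) = q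
    rw [specialFlow_project, translate_translate_neg, project_of_mem hq]
  inner_reversal := inner_compMeasurePreservingₗᵢ_left _ _ <| by
    filter_upwards [ae_mem_phaseSpace] with q hq
    change flowReversal (project (reversal q)) = q
    rw [flowReversal_project, reversal_reversal, project_of_mem hq]
  reversal_flow t := compMeasurePreservingₗᵢ_comm _ _ _ _ fun q => by
    rw [flowReversal, specialFlow_project, specialFlow, flowReversal_project, reversal_translate,
      neg_neg]

end SpecialFlow

section StableLeaves

lemma measurable_stableHeight : Measurable stableHeight := by
  unfold stableHeight
  fun_prop

lemma measurePreserving_slide :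
    MeasurePreserving (fun p : UnitIrrational × Cover => slide p.1 p.2) := by
  have hfst : MeasurePreserving (Prod.map id Prod.snd :
      UnitIrrational × (UnitIrrational × UnitIrrational) → UnitIrrational × UnitIrrational) :=
    (MeasurePreserving.id volume).prod measurePreserving_snd
  have hshift : Measurable fun p : UnitIrrational × (UnitIrrational × UnitIrrational) =>
      leafShift p.2.1 p.1 p.2.2 := by
    unfold leafShift
    fun_prop
  simp only [slide_eq_leafShift]
  exact (measurePreserving_prod_add hfst hshift).comp
    ((measurePreserving_prodAssoc volume volume volume).symm MeasurableEquiv.prodAssoc)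

lemma measurableSet_le_stableHeight (c : ℝ) :
    MeasurableSet {p : UnitIrrational × Cover | c ≤ stableHeight p.2} :=
  measurableSet_le measurable_const (measurable_stableHeight.comp measurable_snd)

lemma quasiMeasurePreserving_project_snd :
    Measure.QuasiMeasurePreserving (fun p : UnitIrrational × Cover => project p.2) volume
      flowMeasure :=
  quasiMeasurePreserving_project.comp Measure.quasiMeasurePreserving_snd

lemma quasiMeasurePreserving_project_slide :
    Measure.QuasiMeasurePreserving (fun p : UnitIrrational × Cover => project (slide p.1 p.2))
      volume flowMeasure :=
  quasiMeasurePreserving_project.comp measurePreserving_slide.quasiMeasurePreserving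

/-- The square integrable functions on the phase space whose lifts to the cover are constant along
the stable leaves of height at least `c`. -/
def leafInvariant (c : ℝ) : Submodule ℝ (Lp ℝ 2 flowMeasure) :=
  aeEqualizer ℝ ℝ 2
    (quasiMeasurePreserving_project_snd.mono_left
      (Measure.restrict_le_self (s := {p | c ≤ stableHeight p.2})).absolutelyContinuous)
    (quasiMeasurePreserving_project_slide.mono_left Measure.restrict_le_self.absolutelyContinuous)

lemma mem_leafInvariant {c : ℝ} {f : Lp ℝ 2 flowMeasure} :
    f ∈ leafInvariant c ↔ ∀ᵐ p : UnitIrrational × Cover, c ≤ stableHeight p.2 →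
      f (project p.2) = f (project (slide p.1 p.2)) :=
  ae_restrict_iff' (measurableSet_le_stableHeight c)

lemma leafInvariant_mono : Monotone leafInvariant := fun c c' hc f hf => by
  rw [mem_leafInvariant] at hf ⊢
  filter_upwards [hf] with p hp hc'
  exact hp (hc.trans hc')

lemma koopman_mem_leafInvariant (t c : ℝ) (f : Lp ℝ 2 flowMeasure) (hf : f ∈ leafInvariant c) :
    koopman t f ∈ leafInvariant (c - t) := by
  rw [mem_leafInvariant] at hf ⊢
  have htranslate : MeasurePreserving (translate t) (volume : Measure Cover) volume :=
    measurePreserving_prod_add (.id _) measurable_const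
  filter_upwards [((MeasurePreserving.id volume).prod htranslate).quasiMeasurePreserving.ae hf,
    Measure.quasiMeasurePreserving_snd.ae (ae_koopman_project t f),
    measurePreserving_slide.quasiMeasurePreserving.ae (ae_koopman_project t f)]
    with p hp hsnd hslide hc
  rw [hsnd, hslide, ← slide_translate]
  exact hp (by rw [Prod.map_snd, stableHeight_translate]; exact sub_le_iff_le_add.1 hc)

lemma ae_eq_slide_of_forall_mem_leafInvariant {f : Lp ℝ 2 flowMeasure}
    (hf : ∀ c, f ∈ leafInvariant c) :
    ∀ᵐ p : UnitIrrational × Cover, f (project p.2) = f (project (slide p.1 p.2)) := by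
  filter_upwards [ae_all_iff.2 fun n : ℕ => mem_leafInvariant.1 (hf (-n))] with p hp
  obtain ⟨n, hn⟩ := exists_nat_ge (-stableHeight p.2)
  exact hp n (neg_le.1 hn)

end StableLeaves

section Ergodicity

lemma quasiMeasurePreserving_reversal :
    Measure.QuasiMeasurePreserving reversal (volume : Measure Cover) volume :=
  (measurePreserving_reversal.quasiMeasurePreserving.mono_left
    volume_absolutelyContinuous_coverMeasure).mono_right coverMeasure_absolutelyContinuous_volume

lemma quasiMeasurePreserving_slide_snd (x' : UnitIrrational) :
    Measure.QuasiMeasurePreserving (fun q => (slide x' q).2) volume volume := by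
  have hshift : Measurable fun p : UnitIrrational × UnitIrrational => leafShift p.1 x' p.2 := by
    unfold leafShift
    fun_prop
  simp only [slide_eq_leafShift]
  exact Measure.quasiMeasurePreserving_snd.comp
    (measurePreserving_prod_add (.id volume) hshift).quasiMeasurePreserving

lemma exists_ae_eq_const_of_ae_eq_slide_snd {G : UnitIrrational × ℝ → ℝ} (hG : Measurable G)
    (h : ∀ᵐ p : UnitIrrational × Cover, G (p.2.1.1, p.2.2) = G (p.1, (slide p.1 p.2).2)) :
    ∃ c, ∀ᵐ q : Cover, G (q.1.1, q.2) = c := by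
  obtain ⟨x', hx'⟩ := (Measure.ae_ae_of_ae_prod h).exists
  have hne : ∀ᵐ x : UnitIrrational, x ≠ x' := Measure.ae_ne volume x'
  obtain ⟨x, hx, hxx'⟩ := ((Measure.ae_ae_of_ae_prod (Measure.ae_ae_of_ae_prod hx')).and hne).exists
  simp only [slide_eq_leafShift] at hx
  obtain ⟨c, hc⟩ := exists_ae_eq_const_of_ae_eq_comp_add (leafShift_injective hxx')
    (hG.comp measurable_prodMk_left) hx
  refine ⟨c, ?_⟩
  filter_upwards [hx', (quasiMeasurePreserving_slide_snd x').ae hc] with q hq hqc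
  exact hq.trans hqc

/-- A function invariant along the unstable leaves, which are parametrized by the second
coordinate, does not depend on that coordinate. Moving along a stable leaf displaces the last
coordinate by an amount that does depend on it. -/
lemma exists_ae_eq_const_of_ae_eq_slide_of_ae_eq_unstable {F : Cover → ℝ} (hF : Measurable F)
    (hstable : ∀ᵐ p : UnitIrrational × Cover, F p.2 = F (slide p.1 p.2))
    (hunstable : ∀ᵐ p : UnitIrrational × Cover, F p.2 = F ((p.2.1.1, p.1), p.2.2)) :
    ∃ c, ∀ᵐ q, F q = c := by
  obtain ⟨y₀, hy₀⟩ := (Measure.ae_ae_of_ae_prod hunstable).exists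
  obtain ⟨c, hc⟩ := exists_ae_eq_const_of_ae_eq_slide_snd
    (G := fun p => F ((p.1, y₀), p.2)) (by fun_prop) <| by
      filter_upwards [hstable, Measure.quasiMeasurePreserving_snd.ae hy₀,
        measurePreserving_slide.quasiMeasurePreserving.ae hy₀] with p hp hsnd hslide
      rw [← hsnd, hp, hslide]
      rfl
  refine ⟨c, ?_⟩
  filter_upwards [hy₀, hc] with q hq hqc
  exact hq.trans hqc

lemma exists_eq_smul_oneL2_of_forall_mem_leafInvariant {f : Lp ℝ 2 flowMeasure}
    (hf : ∀ c, f ∈ leafInvariant c) (hKf : ∀ c, koopmanReversal f ∈ leafInvariant c) :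
    ∃ a : ℝ, f = a • oneL2 flowMeasure := by
  have hunstable : ∀ᵐ p : UnitIrrational × Cover,
      f (project p.2) = f (project ((p.2.1.1, p.1), p.2.2)) := by
    have hreversal : ∀ᵐ p : UnitIrrational × Cover,
        f (project (reversal p.2)) = f (project (reversal (slide p.1 p.2))) := by
      filter_upwards [ae_eq_slide_of_forall_mem_leafInvariant hKf,
        Measure.quasiMeasurePreserving_snd.ae (ae_koopmanReversal_project f),
        measurePreserving_slide.quasiMeasurePreserving.ae (ae_koopmanReversal_project f)]
        with p hp hsnd hslide
      rw [← hsnd, hp, hslide]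
    filter_upwards [(QuasiMeasurePreserving.prodMap (.id volume)
      quasiMeasurePreserving_reversal).ae hreversal] with p hp
    rwa [Prod.map_fst, Prod.map_snd, id, reversal_reversal, reversal_slide_reversal] at hp
  obtain ⟨c, hc⟩ := exists_ae_eq_const_of_ae_eq_slide_of_ae_eq_unstable
    ((Lp.stronglyMeasurable f).measurable.comp quasiMeasurePreserving_project.measurable)
    (ae_eq_slide_of_forall_mem_leafInvariant hf) hunstable
  refine ⟨c, Lp.ext ?_⟩
  filter_upwards [ae_mem_phaseSpace, flowMeasure_absolutelyContinuous_volume.ae_le hc,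
    Lp.coeFn_smul c (oneL2 flowMeasure), Lp.coeFn_const (p := 2) (μ := flowMeasure) (c := (1 : ℝ))]
    with q hq hqc hsmul hone
  rw [Function.comp_apply, project_of_mem hq] at hqc
  rw [hqc, hsmul, Pi.smul_apply, hone, Function.const_apply, smul_eq_mul, mul_one]

end Ergodicity

section StableFiltration

/-- A fundamental domain of the deck transformations that is, unlike `phaseSpace`, a union of
stable leaves. -/
def stableSlab (c : ℝ) : Set Cover := {q | c ≤ stableHeight q ∧ stableHeight (deck q) < c}

lemma measurableSet_stableSlab (c : ℝ) : MeasurableSet (stableSlab c) :=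
  (measurableSet_le measurable_const measurable_stableHeight).inter
    (measurableSet_lt (measurable_stableHeight.comp deck.measurable) measurable_const)

lemma isStrictFundamentalDomain_stableSlab (c : ℝ) :
    IsStrictFundamentalDomain DeckGroup (stableSlab c) :=
  isStrictFundamentalDomain_zpowers_of_height deck.toEquiv (Real.log_pos one_lt_two)
    stableHeight_deck_lt stableHeight_deck_deck_le c

lemma slide_mem_stableSlab {c : ℝ} {q : Cover} (hq : q ∈ stableSlab c) (x' : UnitIrrational) :
    slide x' q ∈ stableSlab c :=
  ⟨(stableHeight_slide q x').symm ▸ hq.1, by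
    rw [deck_slide, stableHeight_slide]
    exact hq.2⟩

/-- The point with first coordinate `x₀` on the stable leaf of the representative of `q` in
`stableSlab c`, projected to the phase space. It is close to `q` for large `c`, because a large
power of `deck` then separates `q` from its representative. -/
def leafPoint (x₀ : UnitIrrational) (c : ℝ) (q : Cover) : Cover :=
  project (slide x₀ ((isStrictFundamentalDomain_stableSlab c).reduce q))

lemma measurable_leafPoint (x₀ : UnitIrrational) (c : ℝ) : Measurable (leafPoint x₀ c) :=
  quasiMeasurePreserving_project.measurable.comp <|
    (measurePreserving_slide.measurable.comp measurable_prodMk_left).comp <|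
      (isStrictFundamentalDomain_stableSlab c).measurable_reduce (measurableSet_stableSlab c)

lemma leafPoint_project (x₀ : UnitIrrational) (c : ℝ) (q : Cover) :
    leafPoint x₀ c (project q) = leafPoint x₀ c q := by
  obtain ⟨g, hg⟩ := isStrictFundamentalDomain_phaseSpace.exists_reduce_eq_smul q
  rw [leafPoint, leafPoint, project, hg, IsStrictFundamentalDomain.reduce_smul]

lemma leafPoint_slide (x₀ x' : UnitIrrational) {c : ℝ} {q : Cover} (hc : c ≤ stableHeight q) :
    leafPoint x₀ c (slide x' q) = leafPoint x₀ c q := by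
  have hE := isStrictFundamentalDomain_stableSlab c
  obtain ⟨n, hn : hE.reduce q = _⟩ := exists_nat_reduce_eq_pow stableHeight_deck_lt hE hc
  obtain ⟨x'', hx'', -⟩ := exists_deck_pow_slide n x' q
  have hmem : (deck.toEquiv ^ n : Equiv.Perm Cover) (slide x' q) ∈ stableSlab c := by
    rw [hx'', ← hn]
    exact slide_mem_stableSlab (hE.reduce_mem q) x''
  rw [leafPoint, leafPoint, hE.reduce_eq_pow_apply hmem, hx'', hn, slide_slide]

lemma exists_leafPoint_eq_project_slide (x₀ : UnitIrrational) {c : ℝ} {q : Cover} {N : ℕ}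
    (hc : stableHeight ((deck.toEquiv ^ (-(N : ℤ)) : Equiv.Perm Cover) q) < c) :
    ∃ x' : UnitIrrational, |(x' : ℝ) - q.1.1| ≤ 2 * (1 / 2) ^ N ∧
      leafPoint x₀ c q = project (slide x' q) := by
  have hE := isStrictFundamentalDomain_stableSlab c
  have hN : (deck.toEquiv ^ N : Equiv.Perm Cover)
      ((deck.toEquiv ^ (-(N : ℤ)) : Equiv.Perm Cover) q) = q := by
    rw [zpow_neg, zpow_natCast, ← Equiv.Perm.mul_apply, mul_inv_cancel, Equiv.Perm.one_apply]
  obtain ⟨k, hk : (deck.toEquiv ^ k : Equiv.Perm Cover) (hE.reduce _) = _⟩ :=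
    exists_nat_pow_reduce_eq stableHeight_deck_lt hE hc
  rw [← hE.reduce_pow_apply N, hN] at hk
  have hpow : (deck.toEquiv ^ (N + k) : Equiv.Perm Cover) (hE.reduce q) = q := by
    rw [pow_add, Equiv.Perm.mul_apply, hk, hN]
  obtain ⟨x', hx', hle⟩ := exists_deck_pow_slide (N + k) x₀ (hE.reduce q)
  rw [hpow] at hx' hle
  refine ⟨x', hle.trans ?_, ?_⟩
  · have hone : |(x₀ : ℝ) - (hE.reduce q).1.1| ≤ 1 :=
      (abs_sub_lt_of_nonneg_of_lt x₀.pos.le x₀.lt_one (UnitIrrational.pos _).le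
        (UnitIrrational.lt_one _)).le
    calc _ ≤ 2 * (1 / 2 : ℝ) ^ (N + k) * 1 := by gcongr
      _ ≤ 2 * (1 / 2) ^ N := by
        rw [mul_one]
        exact mul_le_mul_of_nonneg_left
          (pow_le_pow_of_le_one (by norm_num) (by norm_num) (N.le_add_right k)) zero_le_two
  · rw [← hx']
    exact (isStrictFundamentalDomain_phaseSpace.reduce_pow_apply (N + k) _).symm

lemma continuous_branch (n : ℕ) : Continuous (branch n) :=
  .subtype_mk (continuous_const.div (by fun_prop) fun x => by have := x.pos; positivity) _

lemma continuous_slide_left (q : Cover) : Continuous fun x' => slide x' q := by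
  have hlog : Continuous fun x' : UnitIrrational => Real.log (1 + x' * q.1.2) :=
    Continuous.log (by fun_prop) fun x' => (one_add_mul_pos x' q.1.2).ne'
  unfold slide
  fun_prop

lemma continuous_deck_slide_left (q : Cover) : Continuous fun x' => deck (slide x' q) := by
  simp only [deck_slide]
  have hbranch := continuous_branch (digit q.1.2)
  exact (continuous_slide_left (deck q)).comp hbranch

lemma tendsto_project_slide {q : Cover} (hq : q ∈ phaseSpace) (hpos : 0 < q.2) :
    Tendsto (fun x' => project (slide x' q)) (𝓝 q.1.1) (𝓝 q) := by
  have hslide := (continuous_slide_left q).tendsto q.1.1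
  have hdeck := (continuous_deck_slide_left q).tendsto q.1.1
  rw [slide_self] at hslide hdeck
  refine hslide.congr' ?_
  filter_upwards [hslide.snd_nhds.eventually_const_lt hpos,
    hdeck.snd_nhds.eventually_lt_const hq.2] with x' hx' hx'deck
  exact (project_of_mem ⟨hx'.le, hx'deck⟩).symm

lemma tendsto_leafPoint (x₀ : UnitIrrational) {q : Cover} (hq : q ∈ phaseSpace) (hpos : 0 < q.2) :
    Tendsto (fun n : ℕ => leafPoint x₀ n q) atTop (𝓝 q) := by
  intro V hV
  obtain ⟨δ, hδ, hball⟩ := Metric.mem_nhds_iff.1 (tendsto_project_slide hq hpos hV)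
  obtain ⟨N, hN⟩ := exists_pow_lt_of_lt_one (half_pos hδ) one_half_lt_one
  have hlarge : ∀ᶠ n : ℕ in atTop,
      stableHeight ((deck.toEquiv ^ (-(N : ℤ)) : Equiv.Perm Cover) q) < n :=
    tendsto_natCast_atTop_atTop.eventually_gt_atTop _
  refine mem_map.2 ?_
  filter_upwards [hlarge] with n hn
  obtain ⟨x', hx', heq⟩ := exists_leafPoint_eq_project_slide x₀ hn
  rw [mem_preimage, heq]
  refine hball (a := x') ?_
  rw [Metric.mem_ball, Subtype.dist_eq, Real.dist_eq]
  linarith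

lemma mem_leafInvariant_of_ae_eq_comp_leafPoint {f : Lp ℝ 2 flowMeasure} {φ : Cover → ℝ}
    {x₀ : UnitIrrational} {c : ℝ} (hf : f =ᵐ[flowMeasure] φ ∘ leafPoint x₀ c) :
    f ∈ leafInvariant c := by
  rw [mem_leafInvariant]
  filter_upwards [quasiMeasurePreserving_project_snd.ae hf,
    quasiMeasurePreserving_project_slide.ae hf] with p hp hslide hc
  rw [hp, hslide, Function.comp_apply, Function.comp_apply, leafPoint_project, leafPoint_project,
    leafPoint_slide _ _ hc]

lemma ae_pos_snd : ∀ᵐ q ∂flowMeasure, 0 < q.2 := by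
  have hne : ∀ᵐ q : Cover, q.2 ≠ 0 :=
    Measure.quasiMeasurePreserving_snd.ae (Measure.ae_ne volume 0)
  filter_upwards [ae_mem_phaseSpace, flowMeasure_absolutelyContinuous_volume.ae_le hne]
    with q hq hq0
  exact hq.1.lt_of_ne' hq0

lemma exists_mem_leafInvariant_norm_sub_lt (f : Lp ℝ 2 flowMeasure) (ε : ℝ) (hε : 0 < ε) :
    ∃ c, ∃ w ∈ leafInvariant c, ‖f - w‖ < ε := by
  obtain ⟨φ, hφ⟩ := Metric.denseRange_iff.1
    (BoundedContinuousFunction.toLp_denseRange (p := 2) ℝ flowMeasure ℝ ENNReal.ofNat_ne_top) f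
    (ε / 2) (half_pos hε)
  obtain ⟨x₀⟩ : Nonempty UnitIrrational := nonempty_of_isProbabilityMeasure volume
  have hmeas (n : ℕ) : AEStronglyMeasurable (φ ∘ leafPoint x₀ n) flowMeasure :=
    (φ.continuous.measurable.comp (measurable_leafPoint x₀ n)).aestronglyMeasurable
  have hbound (n : ℕ) (q : Cover) : ‖(φ ∘ leafPoint x₀ n) q‖ ≤ ‖φ‖ := φ.norm_coe_le_norm _
  have hmem (n : ℕ) : MemLp (φ ∘ leafPoint x₀ n) 2 flowMeasure :=
    .of_bound (hmeas n) ‖φ‖ (ae_of_all _ (hbound n))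
  have hφmem : MemLp φ 2 flowMeasure := (φ.memLp_top (μ := flowMeasure)).mono_exponent le_top
  have hlim := tendsto_eLpNorm_sub_of_bounded_of_ae_tendsto ENNReal.ofNat_ne_top hmeas
    hφmem hbound <| by
      filter_upwards [ae_mem_phaseSpace, ae_pos_snd] with q hq hpos
      exact (φ.continuous.tendsto q).comp (tendsto_leafPoint x₀ hq hpos)
  rw [← Lp.tendsto_Lp_iff_tendsto_eLpNorm'' _ hmem _ hφmem] at hlim
  obtain ⟨n, hn⟩ := (Metric.tendsto_atTop.1 hlim (ε / 2) (half_pos hε)).imp fun n h => h n le_rfl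
  refine ⟨n, _, mem_leafInvariant_of_ae_eq_comp_leafPoint (hmem n).coeFn_toLp, ?_⟩
  rw [← dist_eq_norm]
  calc dist f _ ≤ dist f (hφmem.toLp φ) + dist _ (hφmem.toLp φ) := dist_triangle_right _ _ _
    _ < ε := (add_lt_add hφ hn).trans_eq (add_halves ε)

lemma isStableFiltration_leafInvariant : IsStableFiltration koopman leafInvariant where
  isClosed _ := isClosed_aeEqualizer _ _
  monotone := leafInvariant_mono
  flow_mem := koopman_mem_leafInvariant
  dense := exists_mem_leafInvariant_norm_sub_lt

lemma tendsto_flowMeasure_specialFlow_preimage_inter {A B : Set Cover} (hA : MeasurableSet A)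
    (hB : MeasurableSet B) :
    Tendsto (fun t => flowMeasure (specialFlow t ⁻¹' A ∩ B)) atTop
      (𝓝 (flowMeasure A * flowMeasure B)) :=
  tendsto_measure_preimage_inter measurePreserving_specialFlow
    (tendstoWeakly_inner_smul isTimeReversal_koopmanReversal isStableFiltration_leafInvariant
      norm_oneL2 (fun _ => compMeasurePreservingₗᵢ_oneL2 _)
      fun _ => exists_eq_smul_oneL2_of_forall_mem_leafInvariant) hA hB

end StableFiltration

section RealCoordinates

/-- The inclusion of the base of the special flow into the plane. -/
def coeBase : UnitIrrational × UnitIrrational → ℝ × ℝ := Prod.map Subtype.val Subtype.val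

/-- The inclusion of the cover into the ambient space of `DPhi`. -/
def coeCover : Cover → (ℝ × ℝ) × ℝ := Prod.map coeBase id

lemma measurableEmbedding_coeBase : MeasurableEmbedding coeBase :=
  have hval := MeasurableEmbedding.subtype_coe measurableSet_unitIrrationals
  hval.prodMap hval

lemma measurableEmbedding_coeCover : MeasurableEmbedding coeCover :=
  measurableEmbedding_coeBase.prodMap .id

lemma Dset_eq_prod : Dset = unitIrrationals ×ˢ unitIrrationals := by
  ext p
  simp only [Dset, unitIrrationals, mem_prod, mem_ofPred_eq, and_assoc]

lemma coeBase_mem_Dset (p : UnitIrrational × UnitIrrational) : coeBase p ∈ Dset :=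
  Dset_eq_prod ▸ ⟨p.1.2, p.2.2⟩

lemma map_coeBase_volume : volume.map coeBase = volume.restrict Dset := by
  have hval : (volume : Measure UnitIrrational).map Subtype.val = volume.restrict unitIrrationals :=
    map_comap_subtype_coe measurableSet_unitIrrationals volume
  rw [Dset_eq_prod, Measure.volume_eq_prod, Measure.volume_eq_prod, ← Measure.prod_restrict, ← hval]
  exact (Measure.map_prod_map _ _ measurable_subtype_coe measurable_subtype_coe).symm

lemma map_coeBase_naturalExtensionMeasure : naturalExtensionMeasure.map coeBase = mu2 := by
  have hcoe := measurableEmbedding_coeBase.measurable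
  ext S hS
  rw [Measure.map_apply hcoe hS, naturalExtensionMeasure, mu2, withDensity_apply _ (hcoe hS),
    withDensity_apply _ hS, ← map_coeBase_volume, setLIntegral_map hS (by fun_prop) hcoe]
  rfl

lemma map_coeCover_coverMeasure : coverMeasure.map coeCover = mu2.prod volume := by
  have hmap := Measure.map_prod_map naturalExtensionMeasure (volume : Measure ℝ)
    measurableEmbedding_coeBase.measurable measurable_id
  rw [Measure.map_id, map_coeBase_naturalExtensionMeasure] at hmap
  exact hmap.symm

section Roof

variable (p : UnitIrrational × UnitIrrational)

lemma roof_coeBase : roof (coeBase p) = -Real.log (branch (digit p.2) p.1) := by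
  rw [coe_branch, digit_add_one, one_div, Real.log_inv, neg_neg]
  rfl

lemma roof_coeBase_pos : 0 < roof (coeBase p) := by
  rw [roof_coeBase]
  exact neg_pos.2 (log_lt_zero _)

lemma GhatMap_coeBase : GhatMap (coeBase p) = coeBase (naturalExtension p) := by
  refine Prod.ext ?_ rfl
  change _ = (branch (digit p.2) p.1 : ℝ)
  rw [coe_branch, digit_add_one]
  rfl

lemma GhatMap_iterate_coeBase (n : ℕ) :
    GhatMap^[n] (coeBase p) = coeBase (naturalExtension^[n] p) :=
  have hsemi : Function.Semiconj coeBase naturalExtension GhatMap := fun p =>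
    (GhatMap_coeBase p).symm
  (hsemi.iterate_right n p).symm

lemma birk_succ_coeBase (n : ℕ) :
    birk (coeBase p) (n + 1) = birk (coeBase p) n + roof (coeBase (naturalExtension^[n] p)) := by
  rw [birk, Finset.sum_range_succ, GhatMap_iterate_coeBase, birk]

lemma monotone_birk_coeBase : Monotone (birk (coeBase p)) :=
  monotone_nat_of_le_succ fun n => by
    rw [birk_succ_coeBase]
    exact le_add_of_nonneg_right (roof_coeBase_pos _).le

lemma deck_pow_apply (s : ℝ) (n : ℕ) : (deck.toEquiv ^ n : Equiv.Perm Cover) (p, s) =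
    (naturalExtension^[n] p, s - birk (coeBase p) n) := by
  induction n with
  | zero => simp [birk]
  | succ n ih =>
    rw [pow_succ', Equiv.Perm.mul_apply, ih, birk_succ_coeBase, roof_coeBase, ← sub_sub,
      sub_neg_eq_add, Function.iterate_succ_apply']
    rfl

variable {p} in
lemma rTime_coeBase {T : ℝ} {n : ℕ}
    (h : (deck.toEquiv ^ n : Equiv.Perm Cover) (p, T) ∈ phaseSpace) :
    rTime (coeBase p) T = n + 1 := by
  have hnext : deck ((deck.toEquiv ^ n : Equiv.Perm Cover) (p, T)) =
      (naturalExtension^[n + 1] p, T - birk (coeBase p) (n + 1)) := by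
    rw [← deck_pow_apply, pow_succ', Equiv.Perm.mul_apply]
    rfl
  obtain ⟨hle, hlt⟩ := h
  rw [deck_pow_apply] at hle
  rw [hnext] at hlt
  refine IsLeast.csInf_eq ⟨sub_neg.1 hlt, fun m hm => ?_⟩
  refine Nat.succ_le_of_lt ((monotone_birk_coeBase p).reflect_lt ?_)
  exact (sub_nonneg.1 hle).trans_lt hm

end Roof

lemma ofReal_integral_roof : .ofReal (∫ p, roof p ∂mu2) = coverMeasure phaseSpace := by
  rw [← map_coeBase_naturalExtensionMeasure, measurableEmbedding_coeBase.integral_map,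
    coverMeasure_phaseSpace]
  simp only [roof_coeBase]

lemma coeCover_preimage_DPhi : coeCover ⁻¹' DPhi = phaseSpace := by
  ext ⟨p, s⟩
  have hroof : s < roof (coeBase p) ↔ (deck (p, s)).2 < 0 := by
    rw [roof_coeBase]
    exact lt_neg_iff_add_neg
  exact (and_iff_right (coeBase_mem_Dset p)).trans (and_congr_right fun _ => hroof)

lemma mu3_apply (S : Set ((ℝ × ℝ) × ℝ)) : mu3 S = flowMeasure (coeCover ⁻¹' S) := by
  rw [mu3, ofReal_integral_roof, ← map_coeCover_coverMeasure,
    measurableEmbedding_coeCover.restrict_map, coeCover_preimage_DPhi, ← Measure.map_smul,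
    measurableEmbedding_coeCover.map_apply]
  rfl

lemma flowMap_coeCover {t : ℝ} (ht : 0 ≤ t) {q : Cover} (hq : q ∈ phaseSpace) :
    flowMap t (coeCover q) = coeCover (specialFlow t q) := by
  obtain ⟨p, s⟩ := q
  have hE := isStrictFundamentalDomain_phaseSpace
  obtain ⟨n, hn : hE.reduce (p, s + t) = _⟩ :=
    exists_nat_reduce_eq_pow (x := (p, s + t)) height_deck_lt hE (add_nonneg hq.1 ht)
  have hr : rTime (coeBase p) (s + t) = n + 1 := rTime_coeBase (hn ▸ hE.reduce_mem _)
  change (GhatMap^[rTime (coeBase p) (s + t) - 1] (coeBase p),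
    s + t - birk (coeBase p) (rTime (coeBase p) (s + t) - 1)) = coeCover (hE.reduce (p, s + t))
  rw [hr, Nat.add_sub_cancel, GhatMap_iterate_coeBase, hn, deck_pow_apply]
  rfl

end RealCoordinates

end

end GaussFlow

/-- The special flow `{Φ_t}` built over the natural extension `Ĝ` of the
Gauss map with roof function `φ(x,y) = ln(⌊1/y⌋ + x)` is mixing: for all measurable
`A, B ⊆ D_Φ`, `μ₃(Φ_t⁻¹(A) ∩ B) → μ₃(A)·μ₃(B)` as `t → +∞`. -/
theorem statement17 (A B : Set ((ℝ × ℝ) × ℝ)) (hA : MeasurableSet A) (hB : MeasurableSet B)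
    (hA' : A ⊆ DPhi) (hB' : B ⊆ DPhi) :
    Filter.Tendsto (fun t : ℝ => mu3 (flowMap t ⁻¹' A ∩ B)) Filter.atTop
      (nhds (mu3 A * mu3 B)) := by
  have hmix := GaussFlow.tendsto_flowMeasure_specialFlow_preimage_inter
    (GaussFlow.measurableEmbedding_coeCover.measurable hA)
    (GaussFlow.measurableEmbedding_coeCover.measurable hB)
  simp only [GaussFlow.mu3_apply]
  refine hmix.congr' ?_
  filter_upwards [eventually_ge_atTop 0] with t ht
  congr 1
  ext q
  refine and_congr_left fun hq => ?_
  have hq' : q ∈ GaussFlow.phaseSpace := GaussFlow.coeCover_preimage_DPhi ▸ hB' hq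
  simp only [mem_preimage, GaussFlow.flowMap_coeCover ht hq']
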